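/- arXiv:2603.04512 — 2 statements merged into one kernel-verified Lean document; each statement's English description precedes it below -/
import Mathlib

section
/- Let L1 and L2 be propositional bimodal logics with operators □_1, □_E and □_2, □_E respectively, each containing the S5 axioms for the shared □_E and each admitting E-homogeneous models for global consequence. For formulas φ, ψ of the combined language put Φ = sub φ ∪ sub ψ. Then the following are equivalent: (i) φ ⊬*_{L1 ⊗_E L2} ψ; (ii) there is a model based on a frame for L1 ⊗_E L2 with φ true at every world and ψ false at some world; (iii) there is a set Q of Φ-quasistates such that (C1) φ^1 ∧ Q̂^1 ⊬*_{L1} ψ^1, (C2) φ^1 ∧ Q̂^1 ⊬*_{L1} ¬(q̂^1) for each q ∈ Q, and (C3) Q̂^2 ⊬*_{L2} ¬(q̂^2) for each q ∈ Q. -/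
namespace PropML

/-- propositional modal formulas over modal signature `M` -/
inductive PF (M : Type) : Type
  | atom : ℕ → PF M
  | neg : PF M → PF M
  | and : PF M → PF M → PF M
  | box : M → PF M → PF M
  deriving DecidableEq

namespace PF

variable {M M' : Type}

def imp (φ ψ : PF M) : PF M := .neg (.and φ (.neg ψ))

def or (φ ψ : PF M) : PF M := .neg (.and (.neg φ) (.neg ψ))

def dia (m : M) (φ : PF M) : PF M := .neg (.box m (.neg φ))

/-- `⊥` -/
def bot : PF M := .and (.atom 0) (.neg (.atom 0))

/-- renaming of modal operators -/
def mapOp (f : M → M') : PF M → PF M'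
  | atom n => atom n
  | neg φ => neg (mapOp f φ)
  | and φ ψ => and (mapOp f φ) (mapOp f ψ)
  | box m φ => box (f m) (mapOp f φ)

/-- uniform substitution -/
def substP (σ : ℕ → PF M) : PF M → PF M
  | atom n => σ n
  | neg φ => neg (substP σ φ)
  | and φ ψ => and (substP σ φ) (substP σ ψ)
  | box m φ => box m (substP σ φ)

end PF

/-- evaluation treating atoms and boxed formulas as atomic; used to define
the classical tautologies of the modal language -/
def tautEval {M : Type} (v : PF M → Prop) : PF M → Prop
  | .atom n => v (.atom n)
  | .neg φ => ¬ tautEval v φ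
  | .and φ ψ => tautEval v φ ∧ tautEval v ψ
  | .box m φ => v (.box m φ)

/-- classical tautologies of the propositional modal language -/
def IsTaut {M : Type} (φ : PF M) : Prop := ∀ v, tautEval v φ

/-- a (normal) propositional modal `M`-logic -/
structure IsPLogic {M : Type} (L : Set (PF M)) : Prop where
  taut : ∀ φ, IsTaut φ → φ ∈ L
  kax : ∀ (m : M) (n k : ℕ),
    PF.imp (.box m (PF.imp (.atom n) (.atom k)))
      (PF.imp (.box m (.atom n)) (.box m (.atom k))) ∈ L
  mp : ∀ φ ψ, PF.imp φ ψ ∈ L → φ ∈ L → ψ ∈ L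
  nec : ∀ m φ, φ ∈ L → PF.box m φ ∈ L
  subst : ∀ (σ : ℕ → PF M) φ, φ ∈ L → PF.substP σ φ ∈ L

/-- A Kripke `M`-frame. -/
structure KFrame (M : Type) where
  W : Type
  ne : Nonempty W
  R : M → W → W → Prop

/-- truth of a propositional formula in a Kripke model `(F, V)` -/
def PVal {M : Type} {F : KFrame M} (V : ℕ → F.W → Prop) : PF M → F.W → Prop
  | .atom n, w => V n w
  | .neg φ, w => ¬ PVal V φ w
  | .and φ ψ, w => PVal V φ w ∧ PVal V ψ w
  | .box m φ, w => ∀ v, F.R m w v → PVal V φ v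

/-- validity of a propositional formula on a frame -/
def PValid {M : Type} (F : KFrame M) (φ : PF M) : Prop :=
  ∀ (V : ℕ → F.W → Prop) (w : F.W), PVal (F := F) V φ w

/-- `F` is a frame for the logic `L` -/
def FrameFor {M : Type} (F : KFrame M) (L : Set (PF M)) : Prop :=
  ∀ φ ∈ L, PValid F φ

/-- `L` is Kripke complete -/
def KComplete {M : Type} (L : Set (PF M)) : Prop :=
  ∀ φ, (∀ F : KFrame M, FrameFor F L → PValid F φ) → φ ∈ L

/-- global consequence `φ ⊢*_L ψ`: `ψ` is in the smallest set including
`L ∪ {φ}` closed under Modus Ponens and Necessitation -/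
inductive PGlobal {M : Type} (L : Set (PF M)) (φ : PF M) : PF M → Prop
  | ax {ψ} : ψ ∈ L → PGlobal L φ ψ
  | prem : PGlobal L φ φ
  | mp {ψ χ} : PGlobal L φ (PF.imp ψ χ) → PGlobal L φ ψ → PGlobal L φ χ
  | nec (m : M) {ψ} : PGlobal L φ ψ → PGlobal L φ (PF.box m ψ)

/-- `L` is globally Kripke complete -/
def GloballyKComplete {M : Type} (L : Set (PF M)) : Prop :=
  ∀ φ ψ, PGlobal L φ ψ ↔
    ∀ F : KFrame M, FrameFor F L → ∀ V : ℕ → F.W → Prop,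
      (∀ w, PVal (F := F) V φ w) → ∀ w, PVal (F := F) V ψ w

/-- the S5 axioms for the operator `e` -/
def ContainsS5 {M : Type} (L : Set (PF M)) (e : M) : Prop :=
  PF.imp (.box e (.atom 0)) (.atom 0) ∈ L ∧
  PF.imp (.box e (.atom 0)) (.box e (.box e (.atom 0))) ∈ L ∧
  PF.imp (PF.dia e (.atom 0)) (.box e (PF.dia e (.atom 0))) ∈ L

/-- an `(E, κ)`-homogeneous model: in each `E`-equivalence class, each formula
is satisfied either nowhere or at exactly `κ` worlds -/
def EHomog {M : Type} {F : KFrame M} (e : M) (V : ℕ → F.W → Prop)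
    (κ : Cardinal) : Prop :=
  ∀ (w : F.W) (φ : PF M),
    Cardinal.mk {v : F.W // F.R e w v ∧ PVal (F := F) V φ v} = 0 ∨
    Cardinal.mk {v : F.W // F.R e w v ∧ PVal (F := F) V φ v} = κ

/-- `L` admits `E`-homogeneous models -/
def AdmitsEHomog {M : Type} (e : M) (L : Set (PF M)) : Prop :=
  ∃ κ : Cardinal, Cardinal.aleph0 ≤ κ ∧ ∀ κ', κ ≤ κ' → ∀ φ ∉ L,
    ∃ F : KFrame M, FrameFor F L ∧ ∃ V : ℕ → F.W → Prop,
      EHomog e V κ' ∧ ∃ w, ¬ PVal (F := F) V φ w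

/-- `L` admits `E`-homogeneous models for global consequence -/
def AdmitsEHomogGlobal {M : Type} (e : M) (L : Set (PF M)) : Prop :=
  ∃ κ : Cardinal, Cardinal.aleph0 ≤ κ ∧ ∀ κ', κ ≤ κ' → ∀ φ ψ, ¬ PGlobal L φ ψ →
    ∃ F : KFrame M, FrameFor F L ∧ ∃ V : ℕ → F.W → Prop,
      EHomog e V κ' ∧ (∀ w, PVal (F := F) V φ w) ∧ ∃ w, ¬ PVal (F := F) V ψ w

/-- the fusion `L1 ⊗_E L2` of two logics sharing the S5 operator `□_E`
(designated by `none` in each component signature): the smallest propositional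
modal logic in the combined language (with the single shared `□_E`) including
`L1 ∪ L2` -/
def fusionE {M1 M2 : Type} (L1 : Set (PF (Option M1))) (L2 : Set (PF (Option M2))) :
    Set (PF (Option (M1 ⊕ M2))) :=
  ⋂₀ {L | IsPLogic L ∧
    PF.mapOp (Option.map Sum.inl) '' L1 ⊆ L ∧
    PF.mapOp (Option.map Sum.inr) '' L2 ⊆ L}

/-- the propositional modal logic `S5` (of the single operator `□_E`) -/
def S5L : Set (PF Unit) := ⋂₀ {L | IsPLogic L ∧ ContainsS5 L ()}

/-- the left commutativity axiom `□□_E p → □_E □ p` -/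
def lcom {M : Type} (m : M) : PF (Option M) :=
  PF.imp (.box (some m) (.box none (.atom 0))) (.box none (.box (some m) (.atom 0)))

/-- the right commutativity axiom `□_E □ p → □ □_E p` -/
def rcom {M : Type} (m : M) : PF (Option M) :=
  PF.imp (.box none (.box (some m) (.atom 0))) (.box (some m) (.box none (.atom 0)))

/-- the semicommutator `[L, S5]^xd = L ⊗ S5 + {lcom_□ : □ ∈ M}`
(`□_E` is `none`) -/
def LS5xd {M : Type} (L : Set (PF M)) : Set (PF (Option M)) :=
  ⋂₀ {L' | IsPLogic L' ∧
    PF.mapOp Option.some '' L ⊆ L' ∧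
    PF.mapOp (fun _ => (none : Option M)) '' S5L ⊆ L' ∧
    ∀ m : M, lcom m ∈ L'}

/-- the commutator `[L, S5]^cd = [L, S5]^xd + {rcom_□ : □ ∈ M}` -/
def LS5cd {M : Type} (L : Set (PF M)) : Set (PF (Option M)) :=
  ⋂₀ {L' | IsPLogic L' ∧ LS5xd L ⊆ L' ∧ ∀ m : M, rcom m ∈ L'}

/-- the two domain semantics: expanding (`xd`) and constant (`cd`) domains -/
inductive DSem : Type
  | xd | cd
  deriving DecidableEq

/-- `[L, S5]^d` -/
def LS5 {M : Type} (d : DSem) (L : Set (PF M)) : Set (PF (Option M)) :=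
  match d with
  | .xd => LS5xd L
  | .cd => LS5cd L

/-- the fixed Gödel numbering of propositional formulas (relative to a
numbering `eM` of the modal operators) -/
def PF.encode {M : Type} (eM : M → ℕ) : PF M → ℕ
  | .atom n => Nat.pair 0 n
  | .neg φ => Nat.pair 1 (PF.encode eM φ)
  | .and φ ψ => Nat.pair 2 (Nat.pair (PF.encode eM φ) (PF.encode eM ψ))
  | .box m φ => Nat.pair 3 (Nat.pair (eM m) (PF.encode eM φ))

/-- decidability of a propositional logic w.r.t. the fixed Gödel numbering -/
def DecidableP {M : Type} (eM : M → ℕ) (L : Set (PF M)) : Prop :=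
  ComputablePred (fun n : ℕ => ∃ φ ∈ L, PF.encode eM φ = n)

/-- decidability of the global consequence relation -/
def GloballyDecidableP {M : Type} (eM : M → ℕ) (L : Set (PF M)) : Prop :=
  ComputablePred (fun p : ℕ × ℕ =>
    ∃ φ ψ, PGlobal L φ ψ ∧ PF.encode eM φ = p.1 ∧ PF.encode eM ψ = p.2)

end PropML

namespace PropML

/-- the component signature: `some ()` is the proper operator, `none` is `□_E` -/
abbrev OU : Type := Option Unit

/-- the combined signature: `some (Sum.inl ())` is `□₁`, `some (Sum.inr ())`
is `□₂`, and `none` is the shared `□_E` -/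
abbrev OC : Type := Option (Unit ⊕ Unit)

namespace PF

variable {M : Type}

/-- the set of subformulas -/
def sub [DecidableEq M] : PF M → Finset (PF M)
  | atom n => {atom n}
  | neg φ => insert (neg φ) φ.sub
  | and φ ψ => insert (and φ ψ) (φ.sub ∪ ψ.sub)
  | box m φ => insert (box m φ) φ.sub

/-- indices of the proposition letters occurring in a formula -/
def atoms : PF M → Finset ℕ
  | atom n => {n}
  | neg φ => φ.atoms
  | and φ ψ => φ.atoms ∪ ψ.atoms
  | box _ φ => φ.atoms

end PF

/-- finite conjunction (`⊤` for the empty list) -/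
def bigAndP {M : Type} : List (PF M) → PF M
  | [] => PF.imp (.atom 0) (.atom 0)
  | φ :: l => List.foldl PF.and φ l

/-- finite disjunction -/
def bigOrP {M : Type} (l : List (PF M)) : PF M := PF.neg (bigAndP (l.map PF.neg))

/-- a `Φ`-type: a maximal Boolean-consistent subset of `{ψ, ¬ψ ∣ ψ ∈ Φ}` -/
def IsTypeP {M : Type} [DecidableEq M] (Φ t : Finset (PF M)) : Prop :=
  (∀ χ ∈ t, χ ∈ Φ ∨ ∃ ψ ∈ Φ, χ = PF.neg ψ) ∧
  (∀ ψ ∈ Φ, (PF.neg ψ ∈ t ↔ ψ ∉ t)) ∧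
  (∀ ψ₁ ψ₂, PF.and ψ₁ ψ₂ ∈ Φ → (PF.and ψ₁ ψ₂ ∈ t ↔ ψ₁ ∈ t ∧ ψ₂ ∈ t))

/-- a `Φ`-quasistate: a non-empty set of `Φ`-types saturated for `◇_E` -/
def IsQuasistateP {M : Type} [DecidableEq M] (eOp : M) (Φ : Finset (PF M))
    (q : Finset (Finset (PF M))) : Prop :=
  q.Nonempty ∧ (∀ t ∈ q, IsTypeP Φ t) ∧
  ∀ ψ, PF.box eOp (PF.neg ψ) ∈ Φ → ∀ t ∈ q,
    (PF.neg (PF.box eOp (PF.neg ψ)) ∈ t ↔ ∃ t' ∈ q, ψ ∈ t')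

/-- the conjunction of the formulas in the type `t` -/
noncomputable def typeConjP {M : Type} (t : Finset (PF M)) : PF M := bigAndP t.toList

/-- the realisability formula `q̂ = □_E ⋁_{t∈q} t ∧ ⋀_{t∈q} ◇_E t` -/
noncomputable def qhatP {M : Type} (eOp : M) (q : Finset (Finset (PF M))) : PF M :=
  PF.and (PF.box eOp (bigOrP (q.toList.map typeConjP)))
    (bigAndP (q.toList.map (fun t => PF.dia eOp (typeConjP t))))

/-- `Q̂ = ⋁_{q ∈ Q} q̂` -/
noncomputable def QhatP {M : Type} (eOp : M) (Q : Finset (Finset (Finset (PF M)))) :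
    PF M :=
  bigOrP (Q.toList.map (qhatP eOp))

/-- the surrogate translation `·¹` into the language of the first component:
maximal subformulas `□₂ψ` are replaced by the fresh surrogate letter given
by `s` -/
def sur1P (s : PF OC → ℕ) : PF OC → PF OU
  | .atom n => .atom n
  | .neg φ => .neg (sur1P s φ)
  | .and φ ψ => .and (sur1P s φ) (sur1P s ψ)
  | .box none φ => .box none (sur1P s φ)
  | .box (some (Sum.inl _)) φ => .box (some ()) (sur1P s φ)
  | .box (some (Sum.inr _)) φ => .atom (s (.box (some (Sum.inr ())) φ))

/-- the surrogate translation `·²` into the language of the second component -/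
def sur2P (s : PF OC → ℕ) : PF OC → PF OU
  | .atom n => .atom n
  | .neg φ => .neg (sur2P s φ)
  | .and φ ψ => .and (sur2P s φ) (sur2P s ψ)
  | .box none φ => .box none (sur2P s φ)
  | .box (some (Sum.inr _)) φ => .box (some ()) (sur2P s φ)
  | .box (some (Sum.inl _)) φ => .atom (s (.box (some (Sum.inl ())) φ))

/-- `Θ¹(φ)`: the proposition letters of `φ` together with all subformulas of
`□₂`-subformulas -/
def Theta1P (φ : PF OC) : Finset (PF OC) :=
  φ.sub.filter (fun χ => (match χ with | .atom _ => true | _ => false) = true) ∪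
  (φ.sub.filter
    (fun χ => (match χ with | .box (some (Sum.inr _)) _ => true | _ => false) = true)).biUnion
    PF.sub

/-- `Θ²(φ)` -/
def Theta2P (φ : PF OC) : Finset (PF OC) :=
  φ.sub.filter (fun χ => (match χ with | .atom _ => true | _ => false) = true) ∪
  (φ.sub.filter
    (fun χ => (match χ with | .box (some (Sum.inl _)) _ => true | _ => false) = true)).biUnion
    PF.sub

/-- the modal `1`-depth: maximal nesting of `□₁`, ignoring `□₂` and `□_E` -/
def md1P : PF OC → ℕ
  | .atom _ => 0
  | .neg φ => md1P φ
  | .and φ ψ => max (md1P φ) (md1P ψ)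
  | .box none φ => md1P φ
  | .box (some (Sum.inl _)) φ => md1P φ + 1
  | .box (some (Sum.inr _)) φ => md1P φ

/-- the modal `2`-depth -/
def md2P : PF OC → ℕ
  | .atom _ => 0
  | .neg φ => md2P φ
  | .and φ ψ => max (md2P φ) (md2P ψ)
  | .box none φ => md2P φ
  | .box (some (Sum.inl _)) φ => md2P φ
  | .box (some (Sum.inr _)) φ => md2P φ + 1

/-- the pair `(adp¹(φ), adp²(φ))` of alternation depths: `adp¹(φ)` is the
least number of alternating applications of the restoring operations
`·⁻¹, ·⁻², …` needed to recover `φ` from `φ¹`, i.e. the maximal number of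
alternations between `□₁` and `□₂` in `φ` starting from `□₁`; symmetrically
for `adp²`. -/
def adpPairP : PF OC → ℕ × ℕ
  | .atom _ => (0, 0)
  | .neg φ => adpPairP φ
  | .and φ ψ => (max (adpPairP φ).1 (adpPairP ψ).1, max (adpPairP φ).2 (adpPairP ψ).2)
  | .box none φ => adpPairP φ
  | .box (some (Sum.inl _)) φ => ((adpPairP φ).1, (adpPairP φ).1 + 1)
  | .box (some (Sum.inr _)) φ => ((adpPairP φ).2 + 1, (adpPairP φ).2)

/-- `adp¹(φ)` -/
def adp1P (φ : PF OC) : ℕ := (adpPairP φ).1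

/-- `adp²(φ)` -/
def adp2P (φ : PF OC) : ℕ := (adpPairP φ).2

/-- `adp(φ) = min (adp¹(φ), adp²(φ))` -/
def adpP (φ : PF OC) : ℕ := min (adp1P φ) (adp2P φ)

/-- `□_{i,E}^m χ`, in the component language: `□_{i,E}^{m+1} χ =
□_E □_i □_E □_{i,E}^m χ` -/
def boxIE : ℕ → PF OU → PF OU
  | 0, χ => χ
  | n + 1, χ => .box none (.box (some ()) (.box none (boxIE n χ)))

/-- `□_{i,E}^{≤m} χ = χ ∧ □_{i,E}^1 χ ∧ … ∧ □_{i,E}^m χ` -/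
def boxIELe : ℕ → PF OU → PF OU
  | 0, χ => χ
  | n + 1, χ => .and (boxIELe n χ) (boxIE (n + 1) χ)

open Classical in
/-- `Q₁(φ)`: all `Θ¹(φ)`-quasistates `q` with `⊬_L ¬q̂` (for `L = L1 ⊗_E L2`) -/
noncomputable def Qset1P (L : Set (PF OC)) (φ : PF OC) :
    Finset (Finset (Finset (PF OC))) :=
  ((Theta1P φ ∪ (Theta1P φ).image PF.neg).powerset.powerset).filter
    (fun q => IsQuasistateP none (Theta1P φ) q ∧ PF.neg (qhatP none q) ∉ L)

open Classical in
/-- `Q₂(φ)` -/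
noncomputable def Qset2P (L : Set (PF OC)) (φ : PF OC) :
    Finset (Finset (Finset (PF OC))) :=
  ((Theta2P φ ∪ (Theta2P φ).image PF.neg).powerset.powerset).filter
    (fun q => IsQuasistateP none (Theta2P φ) q ∧ PF.neg (qhatP none q) ∉ L)

end PropML

namespace PropML

/-! ### Semantic lemmas -/

theorem pv_foldl {M : Type} {F : KFrame M} (V : ℕ → F.W → Prop) (w : F.W)
    (tr : PF OC → PF M) (hand : ∀ a b, tr (.and a b) = .and (tr a) (tr b))
    (l : List (PF OC)) : ∀ a, PVal V (tr (List.foldl PF.and a l)) w ↔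
      PVal V (tr a) w ∧ ∀ χ ∈ l, PVal V (tr χ) w := by
  induction l with
  | nil => intro a; simp
  | cons b l ih =>
    intro a
    rw [List.foldl_cons, ih, hand]
    simp [PVal, and_assoc]

structure TrOK {M : Type} (e : M) (tr : PF OC → PF M) : Prop where
  neg : ∀ a, tr (.neg a) = .neg (tr a)
  and : ∀ a b, tr (.and a b) = .and (tr a) (tr b)
  box : ∀ a, tr (.box none a) = .box e (tr a)

section
variable {M : Type} {e : M} {tr : PF OC → PF M} (ht : TrOK e tr) {F : KFrame M}
  (V : ℕ → F.W → Prop) (w : F.W)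

theorem pv_bigAnd (ht : TrOK e tr) (l : List (PF OC)) :
    PVal V (tr (bigAndP l)) w ↔ ∀ χ ∈ l, PVal V (tr χ) w := by
  cases l with
  | nil => simp [bigAndP, PF.imp, ht.neg, ht.and, PVal]
  | cons a l => simp [bigAndP, pv_foldl V w tr ht.and]

theorem pv_bigOr (ht : TrOK e tr) (l : List (PF OC)) :
    PVal V (tr (bigOrP l)) w ↔ ∃ χ ∈ l, PVal V (tr χ) w := by
  rw [bigOrP, ht.neg, PVal, pv_bigAnd V w ht]
  simp [ht.neg, PVal]

theorem pv_qhat (ht : TrOK e tr) (q : Finset (Finset (PF OC))) :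
    PVal V (tr (qhatP none q)) w ↔
      (∀ v, F.R e w v → ∃ t ∈ q, ∀ χ ∈ t, PVal V (tr χ) v) ∧
      ∀ t ∈ q, ∃ v, F.R e w v ∧ ∀ χ ∈ t, PVal V (tr χ) v := by
  rw [qhatP, ht.and, PVal, ht.box, PVal, pv_bigAnd V w ht]
  simp only [pv_bigOr V _ ht, typeConjP, List.mem_map, Finset.mem_toList, PF.dia]
  refine and_congr ?_ ?_
  · refine forall_congr' fun v => imp_congr_right fun _ => ?_
    constructor
    · rintro ⟨_, ⟨t, h, rfl⟩, h2⟩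
      exact ⟨t, h, by simpa using (pv_bigAnd V v ht _).1 h2⟩
    · rintro ⟨t, h, h2⟩
      exact ⟨_, ⟨t, h, rfl⟩, (pv_bigAnd V v ht _).2 (by simpa using h2)⟩
  · constructor
    · intro h t hq
      have := h _ ⟨t, hq, rfl⟩
      rw [ht.neg, ht.box, ht.neg] at this
      simp only [PVal, pv_bigAnd V _ ht] at this
      push Not at this
      simpa using this
    · rintro h _ ⟨t, hq, rfl⟩
      rw [ht.neg, ht.box, ht.neg]
      simp only [PVal, pv_bigAnd V _ ht]
      push Not
      simpa using h t hq

theorem pv_Qhat (ht : TrOK e tr) (Q : Finset (Finset (Finset (PF OC)))) :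
    PVal V (tr (QhatP none Q)) w ↔ ∃ q ∈ Q, PVal V (tr (qhatP none q)) w := by
  rw [QhatP, pv_bigOr V w ht]
  simp

end

theorem trOK1 (s : PF OC → ℕ) : TrOK none (sur1P s) :=
  ⟨fun _ => by simp [sur1P], fun _ _ => by simp [sur1P], fun _ => by simp [sur1P]⟩

theorem trOK2 (s : PF OC → ℕ) : TrOK none (sur2P s) :=
  ⟨fun _ => by simp [sur2P], fun _ _ => by simp [sur2P], fun _ => by simp [sur2P]⟩

theorem trOKid : TrOK (none : OC) (fun χ => χ) :=
  ⟨fun _ => rfl, fun _ _ => rfl, fun _ => rfl⟩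

/-! ### Frames -/

theorem pv_subst {M : Type} {F : KFrame M} (V : ℕ → F.W → Prop) (σ : ℕ → PF M)
    (χ : PF M) : ∀ w, PVal V (χ.substP σ) w ↔ PVal (fun n w => PVal V (σ n) w) χ w := by
  induction χ with
  | atom n => intro w; rfl
  | neg a ih => intro w; simp [PF.substP, PVal, ih]
  | and a b iha ihb => intro w; simp [PF.substP, PVal, iha, ihb]
  | box m a ih => intro w; simp [PF.substP, PVal, ih]

theorem pv_imp {M : Type} {F : KFrame M} (V : ℕ → F.W → Prop) (a b : PF M) (w : F.W) :
    PVal V (PF.imp a b) w ↔ (PVal V a w → PVal V b w) := by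
  simp [PF.imp, PVal]

theorem pv_taut {M : Type} {F : KFrame M} (V : ℕ → F.W → Prop) (w : F.W) (χ : PF M) :
    tautEval (fun χ => PVal V χ w) χ ↔ PVal V χ w := by
  induction χ with
  | atom n => rfl
  | neg a ih => simp [tautEval, PVal, ih]
  | and a b iha ihb => simp [tautEval, PVal, iha, ihb]
  | box m a ih => rfl

theorem valid_logic {M : Type} (F : KFrame M) : IsPLogic {χ | PValid F χ} where
  taut := fun χ h V w => (pv_taut V w χ).1 (h _)
  kax := by
    intro m n k V w
    simp only [pv_imp, PVal]
    intro h h' v hv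
    exact h v hv (h' v hv)
  mp := fun a b h h' V w => (pv_imp V a b w).1 (h V w) (h' V w)
  nec := fun m a h V w v _ => h V v
  subst := fun σ a h V w => (pv_subst V σ a w).2 (h _ w)

theorem pg_sound {M : Type} {L : Set (PF M)} {a b : PF M} (h : PGlobal L a b)
    {F : KFrame M} (hF : FrameFor F L) (V : ℕ → F.W → Prop) (ha : ∀ w, PVal V a w) :
    ∀ w, PVal V b w := by
  induction h with
  | ax h => exact hF _ h V
  | prem => exact ha
  | mp _ _ ih1 ih2 => exact fun w => (pv_imp V _ _ w).1 (ih1 w) (ih2 w)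
  | nec m _ ih => exact fun w v _ => ih v

theorem frame_equiv {L : Set (PF OU)} (hS : ContainsS5 L none) {F : KFrame OU}
    (hF : FrameFor F L) : Equivalence (F.R none) := by
  obtain ⟨hT, h4, h5⟩ := hS
  have hr : ∀ w, F.R none w w := by
    intro w
    have := hF _ hT (fun _ v => F.R none w v) w
    rw [pv_imp] at this
    exact this (fun v hv => hv)
  have he : ∀ w u v, F.R none w u → F.R none w v → F.R none u v := by
    intro w u v hu hv
    have := hF _ h5 (fun _ x => x = v) w
    rw [pv_imp] at this
    simp only [PF.dia, PVal] at this
    have := this (fun h => h v hv rfl) u hu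
    push Not at this
    obtain ⟨x, hx, rfl⟩ := this
    exact hx
  have hs : ∀ {x y}, F.R none x y → F.R none y x := fun {x y} h => he x y x h (hr x)
  exact ⟨hr, hs, fun {x y z} h h' => he y x z (hs h) h'⟩

structure IsBM {M : Type} {F G : KFrame M} (f : F.W → G.W) : Prop where
  forth : ∀ m w v, F.R m w v → G.R m (f w) (f v)
  back : ∀ m w u, G.R m (f w) u → ∃ v, F.R m w v ∧ f v = u

theorem pv_bm {M : Type} {F G : KFrame M} {f : F.W → G.W} (hf : IsBM f)
    (V : ℕ → G.W → Prop) (χ : PF M) :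
    ∀ w, PVal (F := F) (fun n w => V n (f w)) χ w ↔ PVal V χ (f w) := by
  induction χ with
  | atom n => intro w; rfl
  | neg a ih => intro w; simp [PVal, ih]
  | and a b iha ihb => intro w; simp [PVal, iha, ihb]
  | box m a ih =>
    intro w
    simp only [PVal, ih]
    constructor
    · intro h u hu
      obtain ⟨v, hv, rfl⟩ := hf.back m w u hu
      exact h v hv
    · exact fun h v hv => h _ (hf.forth m w v hv)

theorem frameFor_cover {M : Type} {L : Set (PF M)} {G : KFrame M}
    (h : ∀ u : G.W, ∃ F : KFrame M, FrameFor F L ∧ ∃ f : F.W → G.W, IsBM f ∧ ∃ w, f w = u) :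
    FrameFor G L := by
  intro χ hχ V u
  obtain ⟨F, hF, f, hf, w, rfl⟩ := h u
  exact (pv_bm hf V χ w).1 (hF χ hχ _ w)

/-- disjoint union -/
def DU {M J : Type} (hJ : Nonempty J) (F : J → KFrame M) : KFrame M where
  W := Σ j, (F j).W
  ne := by
    obtain ⟨j⟩ := hJ
    obtain ⟨w⟩ := (F j).ne
    exact ⟨⟨j, w⟩⟩
  R := fun m x y => ∃ j, ∃ a b : (F j).W, x = ⟨j, a⟩ ∧ y = ⟨j, b⟩ ∧ (F j).R m a b

theorem bm_DU {M J : Type} (hJ : Nonempty J) (F : J → KFrame M) (j : J) :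
    IsBM (F := F j) (G := DU hJ F) (fun w => ⟨j, w⟩) where
  forth := fun m w v h => ⟨j, w, v, rfl, rfl, h⟩
  back := by
    rintro m w u ⟨j', a, b, h, rfl, r⟩
    cases h
    exact ⟨b, r, rfl⟩

/-- copies -/
def CP {M : Type} (Λ : Type) (hΛ : Nonempty Λ) (F : KFrame M) : KFrame M where
  W := Λ × F.W
  ne := by
    obtain ⟨j⟩ := hΛ
    obtain ⟨w⟩ := F.ne
    exact ⟨⟨j, w⟩⟩
  R := fun m x y => x.1 = y.1 ∧ F.R m x.2 y.2

theorem frameFor_CP {M : Type} {L : Set (PF M)} (Λ : Type) (hΛ : Nonempty Λ) {F : KFrame M}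
    (hF : FrameFor F L) : FrameFor (CP Λ hΛ F) L := by
  apply frameFor_cover
  rintro ⟨a, w⟩
  refine ⟨F, hF, fun w => (a, w), ⟨fun m w v h => ⟨rfl, h⟩, ?_⟩, w, rfl⟩
  rintro m w ⟨a', v⟩ ⟨h, r⟩
  cases h
  exact ⟨v, r, rfl⟩

theorem exists_base {L : Set (PF OU)} {κ : Cardinal} (α : PF OU) (S : Set (PF OU))
    (hne : S.Nonempty)
    (h : ∀ β ∈ S, ∃ F : KFrame OU, FrameFor F L ∧ ∃ V : ℕ → F.W → Prop,
      EHomog none V κ ∧ (∀ w, PVal (F := F) V α w) ∧ ∃ w, ¬ PVal (F := F) V β w) :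
    ∃ F : KFrame OU, FrameFor F L ∧ ∃ V : ℕ → F.W → Prop,
      EHomog none V κ ∧ (∀ w, PVal (F := F) V α w) ∧ ∀ β ∈ S, ∃ w, ¬ PVal (F := F) V β w := by
  have h' : ∀ β : S, ∃ F : KFrame OU, FrameFor F L ∧ ∃ V : ℕ → F.W → Prop,
      EHomog none V κ ∧ (∀ w, PVal (F := F) V α w) ∧ ∃ w, ¬ PVal (F := F) V β w :=
    fun β => h β β.2
  choose F hF V hV hα hβ using h'
  have hJ : Nonempty S := hne.to_subtype
  let G := DU hJ F
  let U : ℕ → G.W → Prop := fun n x => V x.1 n x.2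
  have key : ∀ (j : S) (χ : PF OU) (w : (F j).W),
      PVal (F := G) U χ ⟨j, w⟩ ↔ PVal (V j) χ w := fun j χ w =>
    (pv_bm (bm_DU hJ F j) U χ w).symm
  refine ⟨G, ?_, U, ?_, ?_, ?_⟩
  · apply frameFor_cover
    rintro ⟨j, w⟩
    exact ⟨F j, hF j, _, bm_DU hJ F j, w, rfl⟩
  · rintro ⟨j, w⟩ χ
    have : Cardinal.mk {v : G.W // G.R none ⟨j, w⟩ v ∧ PVal (F := G) U χ v} =
        Cardinal.mk {v : (F j).W // (F j).R none w v ∧ PVal (V j) χ v} := by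
      symm
      refine Cardinal.mk_congr (Equiv.ofBijective
        (fun v => ⟨⟨j, v.1⟩, (bm_DU hJ F j).forth _ _ _ v.2.1, (key j χ v.1).2 v.2.2⟩) ⟨?_, ?_⟩)
      · rintro ⟨a, ha⟩ ⟨b, hb⟩ h
        simp only [Subtype.mk.injEq] at h
        cases h
        rfl
      · rintro ⟨x, hx, hx'⟩
        obtain ⟨v, hv, rfl⟩ := (bm_DU hJ F j).back _ _ _ hx
        exact ⟨⟨v, hv, (key j χ v).1 hx'⟩, rfl⟩
    rw [this]
    exact hV j w χ
  · rintro ⟨j, w⟩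
    exact (key j _ w).2 (hα j w)
  · intro β hb
    obtain ⟨w, hw⟩ := hβ ⟨β, hb⟩
    exact ⟨⟨⟨β, hb⟩, w⟩, fun h => hw ((key _ _ w).1 h)⟩

/-! ### Set-theoretic matching -/

theorem fiber_equiv {A A' B : Type} (p : A → B) (p' : A' → B)
    (h : ∀ b, Cardinal.mk {a // p a = b} = Cardinal.mk {a // p' a = b}) :
    ∃ g : A ≃ A', ∀ a, p' (g a) = p a := by
  have h' : ∀ b, Nonempty ({a // p a = b} ≃ {a // p' a = b}) := fun b => Cardinal.eq.1 (h b)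
  let f := fun b => Classical.choice (h' b)
  refine ⟨(Equiv.sigmaFiberEquiv p).symm.trans
    ((Equiv.sigmaCongrRight f).trans (Equiv.sigmaFiberEquiv p')), fun a => ?_⟩
  exact (f (p a) ⟨a, rfl⟩).2

theorem fiber_card {X T : Type} (S : Setoid X) (tp : X → T)
    (x : X) (τ : T) (κ : Cardinal)
    (hom : Cardinal.mk {y // S.r x y ∧ tp y = τ} = 0 ∨
      Cardinal.mk {y // S.r x y ∧ tp y = τ} = κ) (P : Prop)
    (hP : P ↔ ∃ y, S.r x y ∧ tp y = τ) [Decidable P] :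
    Cardinal.mk {y // S.r x y ∧ tp y = τ} = if P then κ else 0 := by
  split_ifs with h
  · obtain ⟨y, hy⟩ := hP.1 h
    rcases hom with h0 | h0
    · rw [Cardinal.mk_eq_zero_iff] at h0
      exact (h0.false ⟨y, hy⟩).elim
    · exact h0
  · rw [Cardinal.mk_eq_zero_iff]
    exact ⟨fun y => h (hP.2 ⟨y.1, y.2⟩)⟩

/-- types realised in a class -/
def qsw {X T : Type} (r : X → X → Prop) (tp : X → T) (x : X) : Set T :=
  {τ | ∃ y, r x y ∧ tp y = τ}

theorem qsw_congr {X T : Type} (S : Setoid X) (tp : X → T) (x x' : X) (h : S.r x x') :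
    qsw S.r tp x = qsw S.r tp x' := by
  ext τ
  constructor
  · rintro ⟨y, hy, e⟩
    exact ⟨y, S.iseqv.trans (S.iseqv.symm h) hy, e⟩
  · rintro ⟨y, hy, e⟩
    exact ⟨y, S.iseqv.trans h hy, e⟩

def qsQ {X T : Type} (S : Setoid X) (tp : X → T) : Quotient S → Set T :=
  Quotient.lift (qsw S.r tp) (fun a b h => qsw_congr S tp a b h)

theorem match0 {X Y T : Type} (S : Setoid X) (S' : Setoid Y) (tp : X → T) (tp' : Y → T)
    (κ : Cardinal)
    (hX : ∀ x τ, Cardinal.mk {y // S.r x y ∧ tp y = τ} = 0 ∨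
      Cardinal.mk {y // S.r x y ∧ tp y = τ} = κ)
    (hY : ∀ x τ, Cardinal.mk {y // S'.r x y ∧ tp' y = τ} = 0 ∨
      Cardinal.mk {y // S'.r x y ∧ tp' y = τ} = κ)
    (hc : ∀ B, Cardinal.mk {c // qsQ S tp c = B} = Cardinal.mk {c // qsQ S' tp' c = B}) :
    ∃ g : X ≃ Y, (∀ x, tp' (g x) = tp x) ∧ ∀ x y, S.r x y ↔ S'.r (g x) (g y) := by
  classical
  obtain ⟨f, hf⟩ := fiber_equiv _ _ hc
  obtain ⟨g, hg⟩ := fiber_equiv (fun x : X => (f (Quotient.mk S x), tp x))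
    (fun y : Y => (Quotient.mk S' y, tp' y)) (by
      rintro ⟨c, τ⟩
      obtain ⟨c', rfl⟩ := f.surjective c
      obtain ⟨x, rfl⟩ := Quotient.exists_rep c'
      obtain ⟨y, hy⟩ := Quotient.exists_rep (f (Quotient.mk S x))
      have hq : qsw S'.r tp' y = qsw S.r tp x := by
        have := hf (Quotient.mk S x)
        rw [← hy] at this
        exact this
      have e1 := fiber_card S tp x τ κ (hX x τ) (τ ∈ qsw S.r tp x) Iff.rfl
      have e2 := fiber_card S' tp' y τ κ (hY y τ) (τ ∈ qsw S.r tp x) (by rw [← hq]; exact Iff.rfl)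
      rw [← hy]
      have e3 : Cardinal.mk {a : X // (f (Quotient.mk S a), tp a) = (Quotient.mk S' y, τ)} =
          Cardinal.mk {a // S.r x a ∧ tp a = τ} := by
        refine Cardinal.mk_congr (Equiv.subtypeEquivRight fun a => ?_)
        rw [Prod.mk.injEq, hy, f.apply_eq_iff_eq, Quotient.eq]
        exact and_congr_left fun _ => ⟨fun h => S.iseqv.symm h, fun h => S.iseqv.symm h⟩
      have e4 : Cardinal.mk {a : Y // (Quotient.mk S' a, tp' a) = (Quotient.mk S' y, τ)} =
          Cardinal.mk {a // S'.r y a ∧ tp' a = τ} := by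
        refine Cardinal.mk_congr (Equiv.subtypeEquivRight fun a => ?_)
        rw [Prod.mk.injEq, Quotient.eq]
        exact and_congr_left fun _ => ⟨fun h => S'.iseqv.symm h, fun h => S'.iseqv.symm h⟩
      rw [e3, e4, e1, e2])
  refine ⟨g, fun x => (Prod.mk.inj (hg x)).2, fun x y => ?_⟩
  have hx := (Prod.mk.inj (hg x)).1
  have hy := (Prod.mk.inj (hg y)).1
  have : S.r x y ↔ Quotient.mk S x = Quotient.mk S y := Quotient.eq.symm
  rw [this]
  have : S'.r (g x) (g y) ↔ Quotient.mk S' (g x) = Quotient.mk S' (g y) := Quotient.eq.symm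
  rw [this, hx, hy, f.apply_eq_iff_eq]

def cpS {W : Type} (Λ : Type) {r : W → W → Prop} (hr : Equivalence r) : Setoid (Λ × W) where
  r := fun x y => x.1 = y.1 ∧ r x.2 y.2
  iseqv := ⟨fun x => ⟨rfl, hr.refl _⟩, fun h => ⟨h.1.symm, hr.symm h.2⟩,
    fun h h' => ⟨h.1.trans h'.1, hr.trans h.2 h'.2⟩⟩

theorem qsw_cp {W T : Type} (Λ : Type) {r : W → W → Prop} (hr : Equivalence r) (tp : W → T)
    (x : Λ × W) : qsw (cpS Λ hr).r (fun y => tp y.2) x = qsw r tp x.2 := by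
  ext τ
  constructor
  · rintro ⟨y, hy, e⟩
    exact ⟨y.2, hy.2, e⟩
  · rintro ⟨y, hy, e⟩
    exact ⟨(x.1, y), ⟨rfl, hy⟩, e⟩

theorem cp_classes {W T : Type} (Λ : Type) {r : W → W → Prop} (hr : Equivalence r) (tp : W → T)
    (hinf : Cardinal.aleph0 ≤ Cardinal.mk Λ) (hW : Cardinal.mk W ≤ Cardinal.mk Λ) (B : Set T) 
    (P : Prop) [Decidable P] (hP : P ↔ ∃ w, qsw r tp w = B) :
    Cardinal.mk {c // qsQ (cpS Λ hr) (fun y => tp y.2) c = B} =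
      if P then Cardinal.mk Λ else 0 := by
  split_ifs with h
  · obtain ⟨w, hw⟩ := hP.1 h
    apply le_antisymm
    · refine (Cardinal.mk_subtype_le _).trans (Cardinal.mk_quotient_le.trans ?_)
      rw [Cardinal.mk_prod, Cardinal.lift_id, Cardinal.lift_id]
      exact (mul_le_mul_right hW _).trans (Cardinal.mul_eq_self hinf).le
    · refine Cardinal.mk_le_of_injective
        (f := fun a => ⟨Quotient.mk (cpS Λ hr) (a, w), ?_⟩) ?_
      · exact (qsw_cp Λ hr tp (a, w)).trans hw
      · intro a b hab
        have := Quotient.exact (Subtype.mk.inj hab)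
        exact this.1
  · rw [Cardinal.mk_eq_zero_iff]
    refine ⟨fun c => h (hP.2 ?_)⟩
    obtain ⟨c, hc⟩ := c
    obtain ⟨x, rfl⟩ := Quotient.exists_rep c
    exact ⟨x.2, (qsw_cp Λ hr tp x).symm.trans hc⟩

theorem cp_hom {W T : Type} (Λ : Type) {r : W → W → Prop} (hr : Equivalence r) (tp : W → T)
    (κ : Cardinal)
    (hX : ∀ x τ, Cardinal.mk {y // r x y ∧ tp y = τ} = 0 ∨
      Cardinal.mk {y // r x y ∧ tp y = τ} = κ) (x : Λ × W) (τ : T) :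
    Cardinal.mk {y // (cpS Λ hr).r x y ∧ tp y.2 = τ} = 0 ∨
      Cardinal.mk {y // (cpS Λ hr).r x y ∧ tp y.2 = τ} = κ := by
  have : Cardinal.mk {y // (cpS Λ hr).r x y ∧ tp y.2 = τ} =
      Cardinal.mk {y // r x.2 y ∧ tp y = τ} := by
    refine Cardinal.mk_congr ⟨fun y => ⟨y.1.2, y.2.1.2, y.2.2⟩,
      fun y => ⟨(x.1, y.1), ⟨rfl, y.2.1⟩, y.2.2⟩, ?_, ?_⟩
    · rintro ⟨⟨a, y⟩, ⟨h, h'⟩, h''⟩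
      cases h
      rfl
    · rintro ⟨y, h⟩
      rfl
  rw [this]
  exact hX _ _

theorem match1 {X Y T : Type} {r : X → X → Prop} {r' : Y → Y → Prop}
    (hr : Equivalence r) (hr' : Equivalence r') (tp : X → T) (tp' : Y → T)
    (κ : Cardinal)
    (hX : ∀ x τ, Cardinal.mk {y // r x y ∧ tp y = τ} = 0 ∨
      Cardinal.mk {y // r x y ∧ tp y = τ} = κ)
    (hY : ∀ x τ, Cardinal.mk {y // r' x y ∧ tp' y = τ} = 0 ∨
      Cardinal.mk {y // r' x y ∧ tp' y = τ} = κ)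
    (hc : ∀ B, (∃ x, qsw r tp x = B) ↔ ∃ y, qsw r' tp' y = B) :
    ∃ Λ : Type, Nonempty Λ ∧ ∃ g : Λ × X ≃ Λ × Y, (∀ x, tp' (g x).2 = tp x.2) ∧
      ∀ x y, (x.1 = y.1 ∧ r x.2 y.2) ↔ ((g x).1 = (g y).1 ∧ r' (g x).2 (g y).2) := by
  classical
  let lam : Cardinal.{0} := max Cardinal.aleph0 (max (Cardinal.mk X) (Cardinal.mk Y))
  have hl : Cardinal.mk lam.out = lam := Cardinal.mk_out _
  have h0 : Cardinal.aleph0 ≤ Cardinal.mk lam.out := by rw [hl]; exact le_max_left _ _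
  have h1 : Cardinal.mk X ≤ Cardinal.mk lam.out := by
    rw [hl]; exact (le_max_left _ _).trans (le_max_right _ _)
  have h2 : Cardinal.mk Y ≤ Cardinal.mk lam.out := by
    rw [hl]; exact (le_max_right _ _).trans (le_max_right _ _)
  refine ⟨lam.out, ?_, ?_⟩
  · exact (Cardinal.infinite_iff.2 h0).nonempty
  · refine match0 (cpS lam.out hr) (cpS lam.out hr') (fun y => tp y.2) (fun y => tp' y.2) κ
      (cp_hom _ hr tp κ hX) (cp_hom _ hr' tp' κ hY) (fun B => ?_)
    rw [cp_classes lam.out hr tp h0 h1 B (∃ x, qsw r tp x = B) Iff.rfl,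
      cp_classes lam.out hr' tp' h0 h2 B (∃ x, qsw r tp x = B) (hc B)]

/-! ### Types in models -/

def tpS (Φ : Finset (PF OC)) (tr : PF OC → PF OU) {F : KFrame OU} (V : ℕ → F.W → Prop)
    (w : F.W) : Set (PF OC) := {χ | χ ∈ Φ ∧ PVal V (tr χ) w}

def tset (Φ t : Finset (PF OC)) : Set (PF OC) := {χ | χ ∈ Φ ∧ χ ∈ t}

theorem tp_iff {Φ t : Finset (PF OC)} (h : IsTypeP Φ t) {tr : PF OC → PF OU}
    (ht : TrOK none tr) {F : KFrame OU} (V : ℕ → F.W → Prop) (w : F.W) :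
    (∀ χ ∈ t, PVal V (tr χ) w) ↔ tpS Φ tr V w = tset Φ t := by
  obtain ⟨ha, hb, -⟩ := h
  constructor
  · intro H
    ext χ
    refine and_congr_right fun hχ => ⟨fun h => ?_, fun h => H _ h⟩
    by_contra h'
    have := H _ ((hb χ hχ).2 h')
    rw [ht.neg] at this
    exact this h
  · intro H χ hχ
    have key : ∀ χ ∈ Φ, (PVal V (tr χ) w ↔ χ ∈ t) := by
      intro χ hχ
      have := Set.ext_iff.1 H χ
      simpa [tpS, tset, hχ] using this
    rcases ha χ hχ with h | ⟨θ, h, rfl⟩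
    · exact (key χ h).2 hχ
    · rw [ht.neg]
      exact fun h' => (hb θ h).1 hχ ((key θ h).1 h')

theorem qsw_of_qhat {Φ : Finset (PF OC)} {q : Finset (Finset (PF OC))}
    (h : ∀ t ∈ q, IsTypeP Φ t) {tr : PF OC → PF OU}
    (ht : TrOK none tr) {F : KFrame OU} (V : ℕ → F.W → Prop) (w : F.W)
    (H : PVal V (tr (qhatP none q)) w) :
    qsw (F.R none) (tpS Φ tr V) w = {τ | ∃ t ∈ q, tset Φ t = τ} := by
  rw [pv_qhat V w ht] at H
  ext τ
  constructor
  · rintro ⟨v, hv, rfl⟩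
    obtain ⟨t, htq, h'⟩ := H.1 v hv
    exact ⟨t, htq, ((tp_iff (h t htq) ht V v).1 h').symm⟩
  · rintro ⟨t, htq, rfl⟩
    obtain ⟨v, hv, h'⟩ := H.2 t htq
    exact ⟨v, hv, (tp_iff (h t htq) ht V v).1 h'⟩

theorem model_data {Φ : Finset (PF OC)} {Q : Finset (Finset (Finset (PF OC)))}
    (hQ : ∀ q ∈ Q, IsQuasistateP none Φ q) {tr : PF OC → PF OU}
    (ht : TrOK none tr) {F : KFrame OU} (V : ℕ → F.W → Prop) {κ : Cardinal}
    (hom : EHomog none V κ)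
    (hg : ∀ w, PVal V (tr (QhatP none Q)) w)
    (hq : ∀ q ∈ Q, ∃ w, PVal V (tr (qhatP none q)) w) :
    (∀ x τ, Cardinal.mk {y // F.R none x y ∧ tpS Φ tr V y = τ} = 0 ∨
      Cardinal.mk {y // F.R none x y ∧ tpS Φ tr V y = τ} = κ) ∧
    ∀ B, (∃ x, qsw (F.R none) (tpS Φ tr V) x = B) ↔
      ∃ q ∈ Q, {τ | ∃ t ∈ q, tset Φ t = τ} = B := by
  refine ⟨fun x τ => ?_, fun B => ⟨?_, ?_⟩⟩
  · by_cases hx : ∃ y, F.R none x y ∧ tpS Φ tr V y = τ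
    · have hx' : τ ∈ qsw (F.R none) (tpS Φ tr V) x := hx
      obtain ⟨q, hqQ, H⟩ := (pv_Qhat V x ht Q).1 (hg x)
      rw [qsw_of_qhat (hQ q hqQ).2.1 ht V x H] at hx'
      obtain ⟨t, htq, rfl⟩ := hx'
      have hT := (hQ q hqQ).2.1 t htq
      have := hom x (tr (typeConjP t))
      have e : ∀ y, PVal V (tr (typeConjP t)) y ↔ tpS Φ tr V y = tset Φ t := by
        intro y
        rw [typeConjP, pv_bigAnd V y ht, ← tp_iff hT ht]
        simp
      simpa only [e] using this
    · left
      rw [Cardinal.mk_eq_zero_iff]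
      exact ⟨fun y => hx ⟨y.1, y.2⟩⟩
  · rintro ⟨x, rfl⟩
    obtain ⟨q, hqQ, H⟩ := (pv_Qhat V x ht Q).1 (hg x)
    exact ⟨q, hqQ, (qsw_of_qhat (hQ q hqQ).2.1 ht V x H).symm⟩
  · rintro ⟨q, hqQ, rfl⟩
    obtain ⟨w, H⟩ := hq q hqQ
    exact ⟨w, qsw_of_qhat (hQ q hqQ).2.1 ht V w H⟩

/-! ### Gluing -/

def SubClosed {M : Type} (Φ : Finset (PF M)) : Prop :=
  (∀ a, PF.neg a ∈ Φ → a ∈ Φ) ∧ (∀ a b, PF.and a b ∈ Φ → a ∈ Φ ∧ b ∈ Φ) ∧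
  ∀ m a, PF.box m a ∈ Φ → a ∈ Φ

theorem self_mem_sub {M : Type} [DecidableEq M] (χ : PF M) : χ ∈ χ.sub := by
  cases χ <;> simp [PF.sub]

theorem subClosed_sub {M : Type} [DecidableEq M] (χ : PF M) : SubClosed χ.sub := by
  induction χ with
  | atom n => simp [SubClosed, PF.sub]
  | neg a ih =>
    obtain ⟨i1, i2, i3⟩ := ih
    have := self_mem_sub a
    refine ⟨?_, ?_, ?_⟩ <;> simp only [PF.sub, Finset.mem_insert] <;> grind
  | and a b iha ihb =>
    obtain ⟨i1, i2, i3⟩ := iha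
    obtain ⟨j1, j2, j3⟩ := ihb
    have := self_mem_sub a
    have := self_mem_sub b
    refine ⟨?_, ?_, ?_⟩ <;> simp only [PF.sub, Finset.mem_insert, Finset.mem_union] <;> grind
  | box m a ih =>
    obtain ⟨i1, i2, i3⟩ := ih
    have := self_mem_sub a
    refine ⟨?_, ?_, ?_⟩ <;> simp only [PF.sub, Finset.mem_insert] <;> grind

theorem subClosed_union {M : Type} [DecidableEq M] {A B : Finset (PF M)}
    (hA : SubClosed A) (hB : SubClosed B) : SubClosed (A ∪ B) := by
  obtain ⟨i1, i2, i3⟩ := hA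
  obtain ⟨j1, j2, j3⟩ := hB
  refine ⟨?_, ?_, ?_⟩ <;> simp only [Finset.mem_union] <;> grind

/-- reduct -/
def RD {M M' : Type} (f : M → M') (F : KFrame M') : KFrame M := ⟨F.W, F.ne, fun m => F.R (f m)⟩

theorem pv_map {M M' : Type} (f : M → M') (F : KFrame M') (V : ℕ → F.W → Prop) (χ : PF M) :
    ∀ w, PVal (F := F) V (χ.mapOp f) w ↔ PVal (F := RD f F) V χ w := by
  induction χ with
  | atom n => intro w; rfl
  | neg a ih => intro w; simp [PF.mapOp, PVal, ih]
  | and a b iha ihb => intro w; simp [PF.mapOp, PVal, iha, ihb]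
  | box m a ih => intro w; simp only [PF.mapOp, PVal, ih]; rfl

theorem frameFor_fusion {L1 L2 : Set (PF OU)} {F : KFrame OC}
    (h1 : FrameFor (RD (Option.map Sum.inl) F) L1)
    (h2 : FrameFor (RD (Option.map Sum.inr) F) L2) : FrameFor F (fusionE L1 L2) := by
  intro χ hχ
  refine hχ {χ | PValid F χ} ⟨valid_logic F, ?_, ?_⟩
  · rintro _ ⟨θ, hθ, rfl⟩ V w
    exact (pv_map _ F V θ w).2 (h1 θ hθ V w)
  · rintro _ ⟨θ, hθ, rfl⟩ V w
    exact (pv_map _ F V θ w).2 (h2 θ hθ V w)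

def GlueF (Λ : Type) (hΛ : Nonempty Λ) (F1 F2 : KFrame OU) (g : Λ × F1.W ≃ Λ × F2.W) :
    KFrame OC where
  W := Λ × F1.W
  ne := (CP Λ hΛ F1).ne
  R := fun m x y => match m with
    | none => x.1 = y.1 ∧ F1.R none x.2 y.2
    | some (Sum.inl _) => x.1 = y.1 ∧ F1.R (some ()) x.2 y.2
    | some (Sum.inr _) => (g x).1 = (g y).1 ∧ F2.R (some ()) (g x).2 (g y).2

theorem glue {L1 L2 : Set (PF OU)} {Φ : Finset (PF OC)} (hΦ : SubClosed Φ) (s : PF OC → ℕ)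
    {F1 F2 : KFrame OU} (hF1 : FrameFor F1 L1) (hF2 : FrameFor F2 L2)
    (V1 : ℕ → F1.W → Prop) (V2 : ℕ → F2.W → Prop)
    (Λ : Type) (hΛ : Nonempty Λ) (g : Λ × F1.W ≃ Λ × F2.W)
    (hg : ∀ x, tpS Φ (sur2P s) V2 (g x).2 = tpS Φ (sur1P s) V1 x.2)
    (hE : ∀ x y, (x.1 = y.1 ∧ F1.R none x.2 y.2) ↔
      ((g x).1 = (g y).1 ∧ F2.R none (g x).2 (g y).2)) :
    FrameFor (GlueF Λ hΛ F1 F2 g) (fusionE L1 L2) ∧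
    ∀ χ ∈ Φ, ∀ x : Λ × F1.W, PVal (F := GlueF Λ hΛ F1 F2 g) (fun n x => V1 n x.2) χ x ↔
      PVal V1 (sur1P s χ) x.2 := by
  constructor
  · apply frameFor_fusion
    · apply frameFor_cover
      intro u
      refine ⟨CP Λ hΛ F1, frameFor_CP Λ hΛ hF1, fun x => x, ⟨?_, ?_⟩, u, rfl⟩
      · rintro (_ | ⟨⟩) w v h <;> exact h
      · rintro (_ | ⟨⟩) w v h <;> exact ⟨v, h, rfl⟩
    · have hA : ∀ (m : OU) (x y : Λ × F1.W),
          (RD (Option.map Sum.inr) (GlueF Λ hΛ F1 F2 g)).R m x y ↔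
            ((g x).1 = (g y).1 ∧ F2.R m (g x).2 (g y).2) := by
        rintro (_ | ⟨⟩) x y
        · exact hE x y
        · exact Iff.rfl
      have hB : ∀ (m : OU) (x y : Λ × F2.W), (x.1 = y.1 ∧ F2.R m x.2 y.2) →
          (RD (Option.map Sum.inr) (GlueF Λ hΛ F1 F2 g)).R m (g.symm x) (g.symm y) := by
        intro m x y h
        rw [hA, g.apply_symm_apply, g.apply_symm_apply]
        exact h
      have hC : ∀ (m : OU) (x : Λ × F2.W) (y : Λ × F1.W),
          (RD (Option.map Sum.inr) (GlueF Λ hΛ F1 F2 g)).R m (g.symm x) y →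
          (x.1 = (g y).1 ∧ F2.R m x.2 (g y).2) := by
        intro m x y h
        rw [hA, g.apply_symm_apply] at h
        exact h
      apply frameFor_cover
      intro u
      refine ⟨CP Λ hΛ F2, frameFor_CP Λ hΛ hF2, g.symm, ⟨?_, ?_⟩, g u, g.symm_apply_apply u⟩
      · exact fun m w v h => hB m w v h
      · exact fun m w v h => ⟨g v, hC m w v h, g.symm_apply_apply v⟩
  · have key : ∀ χ ∈ Φ, ∀ x, PVal V1 (sur1P s χ) x.2 ↔ PVal V2 (sur2P s χ) (g x).2 := by
      intro χ hχ x
      have := Set.ext_iff.1 (hg x) χ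
      simpa [tpS, hχ, iff_comm] using this
    obtain ⟨c1, c2, c3⟩ := hΦ
    intro χ
    induction χ with
    | atom n => intro _ x; simp [PVal, sur1P]
    | neg a ih =>
      intro h x
      simp only [PVal, sur1P, ih (c1 _ h)]
    | and a b iha ihb =>
      intro h x
      simp only [PVal, sur1P, iha (c2 _ _ h).1, ihb (c2 _ _ h).2]
    | box m a ih =>
      intro h x
      have ih := ih (c3 _ _ h)
      rcases m with _ | ⟨⟨⟩⟩ | ⟨⟨⟩⟩
      · simp only [sur1P, PVal]
        constructor
        · exact fun H v hv => (ih (x.1, v)).1 (H (x.1, v) ⟨rfl, hv⟩)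
        · exact fun H v hv => (ih v).2 (H _ hv.2)
      · simp only [sur1P, PVal]
        constructor
        · exact fun H v hv => (ih (x.1, v)).1 (H (x.1, v) ⟨rfl, hv⟩)
        · exact fun H v hv => (ih v).2 (H _ hv.2)
      · rw [key _ h x]
        have k := key _ (c3 _ _ h)
        simp only [sur2P, PVal]
        constructor
        · intro H v hv
          have := (k (g.symm ((g x).1, v))).1 ((ih _).1 (H (g.symm ((g x).1, v)) (by
            change (g x).1 = (g (g.symm ((g x).1, v))).1 ∧
              F2.R _ (g x).2 (g (g.symm ((g x).1, v))).2
            simpa using hv)))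
          simpa using this
        · exact fun H v hv => (ih v).2 ((k v).2 (H _ hv.2))

/-! ### Canonical models -/

structure IsTh {M : Type} (T : Set (PF M)) : Prop where
  taut : ∀ a, IsTaut a → a ∈ T
  mp : ∀ a b, PF.imp a b ∈ T → a ∈ T → b ∈ T

structure IsMCS {M : Type} (Γ : Set (PF M)) : Prop extends IsTh Γ where
  neg : ∀ a, PF.neg a ∈ Γ ↔ a ∉ Γ

theorem IsTh.t1 {M : Type} {T : Set (PF M)} (h : IsTh T) {a b : PF M}
    (hab : ∀ v, tautEval v a → tautEval v b) (ha : a ∈ T) : b ∈ T :=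
  h.mp a b (h.taut _ (fun v => by simpa [PF.imp, tautEval] using hab v)) ha

theorem IsTh.t2 {M : Type} {T : Set (PF M)} (h : IsTh T) {a b c : PF M}
    (hab : ∀ v, tautEval v a → tautEval v b → tautEval v c) (ha : a ∈ T) (hb : b ∈ T) : c ∈ T :=
  h.mp b c (h.t1 (fun v => by simpa [PF.imp, tautEval] using hab v) ha) hb

theorem lind {M : Type} {T : Set (PF M)} (hT : IsTh T) {χ : PF M} (hχ : χ ∉ T) :
    ∃ Γ, T ⊆ Γ ∧ IsMCS Γ ∧ χ ∉ Γ := by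
  obtain ⟨Γ, hTΓ, hm⟩ := zorn_subset_nonempty {Γ : Set (PF M) | IsTh Γ ∧ χ ∉ Γ} (by
    intro c hc hch hne
    refine ⟨⋃₀ c, ⟨⟨?_, ?_⟩, ?_⟩, fun s hs => Set.subset_sUnion_of_mem hs⟩
    · intro a ha
      obtain ⟨s, hs⟩ := hne
      exact ⟨s, hs, (hc hs).1.taut a ha⟩
    · rintro a b ⟨s, hs, h⟩ ⟨s', hs', h'⟩
      rcases hch.total hs hs' with h'' | h''
      · exact ⟨s', hs', (hc hs').1.mp a b (h'' h) h'⟩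
      · exact ⟨s, hs, (hc hs).1.mp a b h (h'' h')⟩
    · rintro ⟨s, hs, h⟩
      exact (hc hs).2 h) T ⟨hT, hχ⟩
  obtain ⟨hΓ, hn⟩ := hm.prop
  have key : ∀ a, a ∉ Γ → PF.imp a χ ∈ Γ := by
    intro a ha
    by_contra h
    have := hm.le_of_ge (y := {b | PF.imp a b ∈ Γ}) ⟨⟨?_, ?_⟩, h⟩ ?_
    · exact ha (this (hΓ.taut _ (fun v => by simp [PF.imp, tautEval])))
    · intro b hb
      exact hΓ.taut _ (fun v => by simp [PF.imp, tautEval, hb v])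
    · intro b c hbc hb
      exact hΓ.t2 (fun v => by simp only [PF.imp, tautEval]; tauto) hbc hb
    · intro b hb
      exact hΓ.t1 (fun v => by simp only [PF.imp, tautEval]; tauto) hb
  refine ⟨Γ, hTΓ, ⟨hΓ, fun a => ⟨fun h h' => ?_, fun h => ?_⟩⟩, hn⟩
  · exact hn (hΓ.t2 (fun v => by simp only [tautEval]; tauto) h h')
  · by_contra h'
    exact hn (hΓ.t2 (fun v => by simp only [PF.imp, tautEval]; tauto) (key _ h) (key _ h'))

/-- global theories -/
structure IsGT {M : Type} (T : Set (PF M)) : Prop extends IsTh T where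
  nec : ∀ m a, a ∈ T → PF.box m a ∈ T
  k : ∀ m a b, PF.imp (.box m (PF.imp a b)) (PF.imp (.box m a) (.box m b)) ∈ T

def CanF {M : Type} (T : Set (PF M)) (hT : IsTh T) (χ : PF M) (hχ : χ ∉ T) : KFrame M where
  W := {Γ : Set (PF M) // T ⊆ Γ ∧ IsMCS Γ}
  ne := by
    obtain ⟨Γ, h, h', _⟩ := lind hT hχ
    exact ⟨⟨Γ, h, h'⟩⟩
  R := fun m Γ Δ => ∀ a, PF.box m a ∈ Γ.1 → a ∈ Δ.1

theorem truth {M : Type} {T : Set (PF M)} (hT : IsGT T) (χ : PF M) (hχ : χ ∉ T)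
    (θ : PF M) : ∀ Γ : (CanF T hT.toIsTh χ hχ).W,
      PVal (F := CanF T hT.toIsTh χ hχ) (fun n Γ => PF.atom n ∈ Γ.1) θ Γ ↔ θ ∈ Γ.1 := by
  induction θ with
  | atom n => intro Γ; rfl
  | neg a ih => intro Γ; rw [PVal, ih, Γ.2.2.neg]
  | and a b iha ihb =>
    intro Γ
    rw [PVal, iha, ihb]
    have hh := Γ.2.2.toIsTh
    constructor
    · exact fun h => hh.t2 (fun v => by simp only [tautEval]; tauto) h.1 h.2
    · exact fun h => ⟨hh.t1 (fun v => by simp only [tautEval]; tauto) h,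
        hh.t1 (fun v => by simp only [tautEval]; tauto) h⟩
  | box m a ih =>
    intro Γ
    rw [PVal]
    simp only [ih]
    constructor
    · intro h
      by_contra h'
      have hh := Γ.2.2.toIsTh
      have hth : IsTh {b | PF.box m b ∈ Γ.1} := by
        refine ⟨fun b hb => Γ.2.1 (hT.nec m b (hT.taut b hb)), fun b c hbc hb => ?_⟩
        exact hh.mp _ _ (hh.mp _ _ (Γ.2.1 (hT.k m b c)) hbc) hb
      obtain ⟨Δ, h1, h2, h3⟩ := lind hth (χ := a) h'
      exact h3 (h ⟨Δ, fun b hb => h1 (Γ.2.1 (hT.nec m b hb)), h2⟩ (fun b hb => h1 hb))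
    · exact fun h Δ hΔ => hΔ _ h

theorem fusion_logic (L1 L2 : Set (PF OU)) : IsPLogic (fusionE L1 L2) where
  taut := fun a h _ hL => hL.1.taut a h
  kax := fun m n k _ hL => hL.1.kax m n k
  mp := fun a b h h' _ hL => hL.1.mp a b (h _ hL) (h' _ hL)
  nec := fun m a h _ hL => hL.1.nec m a (h _ hL)
  subst := fun σ a h _ hL => hL.1.subst σ a (h _ hL)

theorem pg_GT {M : Type} {L : Set (PF M)} (hL : IsPLogic L) (φ : PF M) :
    IsGT {χ | PGlobal L φ χ} where
  taut := fun a h => .ax (hL.taut a h)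
  mp := fun a b h h' => .mp h h'
  nec := fun m a h => .nec m h
  k := fun m a b => .ax (by
    have := hL.subst (fun n => if n = 0 then a else b) _ (hL.kax m 0 1)
    simpa [PF.substP, PF.imp] using this)

theorem can_equiv {T : Set (PF OC)} (hT : IsGT T) (χ : PF OC) (hχ : χ ∉ T)
    (hS : ∀ a, PF.imp (.box none a) a ∈ T ∧
      PF.imp (.box none a) (.box none (.box none a)) ∈ T ∧
      PF.imp (PF.dia none a) (.box none (PF.dia none a)) ∈ T) :
    Equivalence ((CanF T hT.toIsTh χ hχ).R none) := by
  have tr := truth hT χ hχ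
  have use : ∀ (Γ : (CanF T hT.toIsTh χ hχ).W) a b, PF.imp a b ∈ T → a ∈ Γ.1 → b ∈ Γ.1 :=
    fun Γ a b h h' => Γ.2.2.mp _ _ (Γ.2.1 h) h'
  have hr : ∀ w, (CanF T hT.toIsTh χ hχ).R none w w :=
    fun w a h => use w _ _ (hS a).1 h
  have he : ∀ w u v, (CanF T hT.toIsTh χ hχ).R none w u → (CanF T hT.toIsTh χ hχ).R none w v →
      (CanF T hT.toIsTh χ hχ).R none u v := by
    intro w u v hu hv a ha
    by_contra hn
    have h1 : PF.dia none (PF.neg a) ∈ w.1 := by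
      rw [← tr]
      intro h
      have := h v hv
      simp only [PVal, tr] at this
      exact this hn
    have h2 := hu _ (use w _ _ (hS (PF.neg a)).2.2 h1)
    rw [← tr] at h2 ha
    refine h2 (fun x hx => ?_)
    simp only [PVal, not_not]
    exact ha x hx
  have hs : ∀ {x y}, (CanF T hT.toIsTh χ hχ).R none x y → (CanF T hT.toIsTh χ hχ).R none y x :=
    fun {x y} h => he x y x h (hr x)
  exact ⟨hr, hs, fun {x y z} h h' => he y x z (hs h) h'⟩

theorem fusion_S5 {L1 L2 : Set (PF OU)} (hS : ContainsS5 L1 none) (a : PF OC) :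
    PF.imp (.box none a) a ∈ fusionE L1 L2 ∧
      PF.imp (.box none a) (.box none (.box none a)) ∈ fusionE L1 L2 ∧
      PF.imp (PF.dia none a) (.box none (PF.dia none a)) ∈ fusionE L1 L2 := by
  have key : ∀ χ ∈ L1, (χ.mapOp (Option.map Sum.inl)).substP (fun _ => a) ∈ fusionE L1 L2 :=
    fun χ h => (fusion_logic L1 L2).subst _ _ (fun L hL => hL.2.1 ⟨χ, h, rfl⟩)
  exact ⟨key _ hS.1, key _ hS.2.1, key _ hS.2.2⟩

/-! ### Restoring surrogates -/

open Classical in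
noncomputable def sig (s : PF OC → ℕ) (n : ℕ) : PF OC :=
  if h : ∃ θ, s θ = n then h.choose else .atom n

theorem sig_s {s : PF OC → ℕ} (hs : Function.Injective s) (θ : PF OC) : sig s (s θ) = θ := by
  have h : ∃ θ', s θ' = s θ := ⟨θ, rfl⟩
  rw [sig, dif_pos h]
  exact hs h.choose_spec

noncomputable def bk (f : OU → OC) (s : PF OC → ℕ) (χ : PF OU) : PF OC :=
  (χ.mapOp f).substP (sig s)

theorem bk_pg {f : OU → OC} {L : Set (PF OU)} {T : Set (PF OC)} (hT : IsGT T)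
    (s : PF OC → ℕ) (hL : ∀ χ ∈ L, bk f s χ ∈ T) {α β : PF OU} (h : PGlobal L α β)
    (hα : bk f s α ∈ T) : bk f s β ∈ T := by
  induction h with
  | ax h => exact hL _ h
  | prem => exact hα
  | mp _ _ i1 i2 => exact hT.mp _ _ i1 i2
  | nec m _ ih => exact hT.nec (f m) _ ih

theorem bk_sur1 {s : PF OC → ℕ} (hs : Function.Injective s) (χ : PF OC)
    (h : ∀ θ, s θ ∉ χ.atoms) : bk (Option.map Sum.inl) s (sur1P s χ) = χ := by
  induction χ with
  | atom n =>
    have : ¬ ∃ θ, s θ = n := by simpa [PF.atoms] using h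
    simp [sur1P, bk, PF.mapOp, PF.substP, sig, this]
  | neg a ih => exact congrArg PF.neg (ih h)
  | and a b iha ihb =>
    simp only [PF.atoms, Finset.mem_union, not_or] at h
    exact congrArg₂ PF.and (iha fun θ => (h θ).1) (ihb fun θ => (h θ).2)
  | box m a ih =>
    rcases m with _ | ⟨⟨⟩⟩ | ⟨⟨⟩⟩
    · exact congrArg (PF.box _) (ih h)
    · exact congrArg (PF.box _) (ih h)
    · exact sig_s hs _

theorem bk_sur2 {s : PF OC → ℕ} (hs : Function.Injective s) (χ : PF OC)
    (h : ∀ θ, s θ ∉ χ.atoms) : bk (Option.map Sum.inr) s (sur2P s χ) = χ := by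
  induction χ with
  | atom n =>
    have : ¬ ∃ θ, s θ = n := by simpa [PF.atoms] using h
    simp [sur2P, bk, PF.mapOp, PF.substP, sig, this]
  | neg a ih => exact congrArg PF.neg (ih h)
  | and a b iha ihb =>
    simp only [PF.atoms, Finset.mem_union, not_or] at h
    exact congrArg₂ PF.and (iha fun θ => (h θ).1) (ihb fun θ => (h θ).2)
  | box m a ih =>
    rcases m with _ | ⟨⟨⟩⟩ | ⟨⟨⟩⟩
    · exact congrArg (PF.box _) (ih h)
    · exact sig_s hs _
    · exact congrArg (PF.box _) (ih h)

theorem trOKb1 (s : PF OC → ℕ) :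
    TrOK none (fun χ => bk (Option.map Sum.inl) s (sur1P s χ)) :=
  ⟨fun _ => rfl, fun _ _ => rfl, fun _ => rfl⟩

theorem trOKb2 (s : PF OC → ℕ) :
    TrOK none (fun χ => bk (Option.map Sum.inr) s (sur2P s χ)) :=
  ⟨fun _ => rfl, fun _ _ => rfl, fun _ => rfl⟩

theorem qhat_tr_eq {Φ : Finset (PF OC)} {q : Finset (Finset (PF OC))}
    (hq : ∀ t ∈ q, IsTypeP Φ t) {tr : PF OC → PF OC} (ht : TrOK none tr)
    (hid : ∀ χ ∈ Φ, tr χ = χ) {F : KFrame OC} (V : ℕ → F.W → Prop) (w : F.W) :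
    PVal V (tr (qhatP none q)) w ↔ PVal V (qhatP none q) w := by
  have h' : ∀ t ∈ q, ∀ χ ∈ t, tr χ = χ := by
    intro t h χ hχ
    rcases (hq t h).1 χ hχ with h | ⟨θ, h, rfl⟩
    · exact hid χ h
    · rw [ht.neg, hid θ h]
  have e : ∀ t ∈ q, ∀ v, (∀ χ ∈ t, PVal V (tr χ) v) ↔ (∀ χ ∈ t, PVal V χ v) := by
    intro t h v
    refine forall₂_congr fun χ hχ => ?_
    rw [h' t h χ hχ]
  rw [pv_qhat V w ht, pv_qhat V w trOKid]
  refine and_congr ?_ ?_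
  · refine forall₂_congr fun v _ => ?_
    exact exists_congr fun t => and_congr_right fun h => e t h v
  · refine forall₂_congr fun t h => ?_
    exact exists_congr fun v => and_congr_right fun _ => e t h v

open Classical in
noncomputable def tyF (Φ : Finset (PF OC)) {F : KFrame OC} (V : ℕ → F.W → Prop) (w : F.W) :
    Finset (PF OC) := (Φ ∪ Φ.image PF.neg).filter (fun χ => PVal V χ w)

theorem tyF_type {Φ : Finset (PF OC)} (hΦ : SubClosed Φ) {F : KFrame OC} (V : ℕ → F.W → Prop)
    (w : F.W) : IsTypeP Φ (tyF Φ V w) := by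
  refine ⟨?_, ?_, ?_⟩
  · intro χ h
    simp only [tyF, Finset.mem_filter, Finset.mem_union, Finset.mem_image] at h
    rcases h.1 with h' | ⟨a, h', rfl⟩
    · exact .inl h'
    · exact .inr ⟨a, h', rfl⟩
  · intro a h
    have : PF.neg a ∈ Φ.image PF.neg := Finset.mem_image_of_mem _ h
    simp [tyF, h, PVal]
  · intro a b h
    simp [tyF, h, PVal, (hΦ.2.1 _ _ h).1, (hΦ.2.1 _ _ h).2]

open Classical in
theorem exists_quasi {Φ : Finset (PF OC)} (hΦ : SubClosed Φ) {F : KFrame OC}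
    (hF : Equivalence (F.R none)) (V : ℕ → F.W → Prop) (w : F.W) :
    ∃ q ∈ (Φ ∪ Φ.image PF.neg).powerset.powerset, IsQuasistateP none Φ q ∧
      PVal V (qhatP none q) w := by
  let q := (Φ ∪ Φ.image PF.neg).powerset.filter (fun t => ∃ v, F.R none w v ∧ tyF Φ V v = t)
  have hq : ∀ t, t ∈ q ↔ ∃ v, F.R none w v ∧ tyF Φ V v = t := by
    intro t
    simp only [q, Finset.mem_filter, and_iff_right_iff_imp, Finset.mem_powerset]
    rintro ⟨v, -, rfl⟩
    exact Finset.filter_subset _ _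
  refine ⟨q, ?_, ⟨?_, ?_, ?_⟩, ?_⟩
  · rw [Finset.mem_powerset]
    exact Finset.filter_subset _ _
  · exact ⟨_, (hq _).2 ⟨w, hF.refl w, rfl⟩⟩
  · intro t h
    obtain ⟨v, -, rfl⟩ := (hq t).1 h
    exact tyF_type hΦ V v
  · intro a ha t h
    obtain ⟨v, hv, rfl⟩ := (hq t).1 h
    have haΦ : a ∈ Φ := hΦ.1 _ (hΦ.2.2 _ _ ha)
    have e1 : PF.neg (PF.box none (PF.neg a)) ∈ tyF Φ V v ↔ ∃ u, F.R none v u ∧ PVal V a u := by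
      simp [tyF, ha, PVal]
    rw [e1]
    constructor
    · rintro ⟨u, hu, h⟩
      exact ⟨_, (hq _).2 ⟨u, hF.trans hv hu, rfl⟩, by simp [tyF, haΦ, h]⟩
    · rintro ⟨t', ht', h⟩
      obtain ⟨u, hu, rfl⟩ := (hq t').1 ht'
      exact ⟨u, hF.trans (hF.symm hv) hu, (Finset.mem_filter.1 h).2⟩
  · rw [pv_qhat V w trOKid]
    constructor
    · intro v hv
      exact ⟨_, (hq _).2 ⟨v, hv, rfl⟩, fun χ h => (Finset.mem_filter.1 h).2⟩
    · intro t h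
      obtain ⟨v, hv, rfl⟩ := (hq t).1 h
      exact ⟨v, hv, fun χ h => (Finset.mem_filter.1 h).2⟩

open Classical in
theorem one_to_three (L1 L2 : Set (PF OU))
    (hS1 : ContainsS5 L1 none)
    (φ ψ : PF OC) (Φ : Finset (PF OC)) (hΦ : SubClosed Φ) (hφ : φ ∈ Φ) (hψ : ψ ∈ Φ)
    (s : PF OC → ℕ) (hs : Function.Injective s)
    (hfresh : ∀ χ ∈ Φ, ∀ θ, s θ ∉ χ.atoms) (hn : ¬ PGlobal (fusionE L1 L2) φ ψ) :
      ∃ Q : Finset (Finset (Finset (PF OC))),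
        (∀ q ∈ Q, IsQuasistateP none Φ q) ∧
        (¬ PGlobal L1 (PF.and (sur1P s φ) (sur1P s (QhatP none Q))) (sur1P s ψ)) ∧
        (∀ q ∈ Q, ¬ PGlobal L1 (PF.and (sur1P s φ) (sur1P s (QhatP none Q)))
          (PF.neg (sur1P s (qhatP none q)))) ∧
        (∀ q ∈ Q, ¬ PGlobal L2 (sur2P s (QhatP none Q))
          (PF.neg (sur2P s (qhatP none q)))) := by
  let T : Set (PF OC) := {χ | PGlobal (fusionE L1 L2) φ χ}
  have hT : IsGT T := pg_GT (fusion_logic L1 L2) φ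
  have hψT : ψ ∉ T := hn
  let F := CanF T hT.toIsTh ψ hψT
  let V : ℕ → F.W → Prop := fun n Γ => PF.atom n ∈ Γ.1
  have hTr : ∀ χ (Γ : F.W), PVal V χ Γ ↔ χ ∈ Γ.1 := fun χ => truth hT ψ hψT χ
  have hmem : ∀ χ, χ ∈ T ↔ ∀ Γ : F.W, PVal V χ Γ := by
    intro χ
    constructor
    · intro h Γ
      exact (hTr χ Γ).2 (Γ.2.1 h)
    · intro h
      by_contra h'
      obtain ⟨Γ, a, b, c⟩ := lind hT.toIsTh h'
      exact c ((hTr χ ⟨Γ, a, b⟩).1 (h _))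
  have hE : Equivalence (F.R none) := can_equiv hT ψ hψT (fun a =>
    ⟨.ax (fusion_S5 hS1 a).1, .ax (fusion_S5 hS1 a).2.1, .ax (fusion_S5 hS1 a).2.2⟩)
  let Q := (Φ ∪ Φ.image PF.neg).powerset.powerset.filter
    (fun q => IsQuasistateP none Φ q ∧ PF.neg (qhatP none q) ∉ T)
  have hQ : ∀ q ∈ Q, IsQuasistateP none Φ q ∧ PF.neg (qhatP none q) ∉ T :=
    fun q h => (Finset.mem_filter.1 h).2
  have hQex : ∀ Γ : F.W, ∃ q ∈ Q, PVal V (qhatP none q) Γ := by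
    intro Γ
    obtain ⟨q, a, b, c⟩ := exists_quasi hΦ hE V Γ
    exact ⟨q, Finset.mem_filter.2 ⟨a, b, fun h => (hmem _).1 h Γ c⟩, c⟩
  have hφT : φ ∈ T := .prem
  have hL1 : ∀ χ ∈ L1, bk (Option.map Sum.inl) s χ ∈ T := fun χ h => .ax
    ((fusion_logic L1 L2).subst _ _ (fun L hL => hL.2.1 ⟨χ, h, rfl⟩))
  have hL2 : ∀ χ ∈ L2, bk (Option.map Sum.inr) s χ ∈ T := fun χ h => .ax
    ((fusion_logic L1 L2).subst _ _ (fun L hL => hL.2.2 ⟨χ, h, rfl⟩))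
  have id1 : ∀ χ ∈ Φ, bk (Option.map Sum.inl) s (sur1P s χ) = χ :=
    fun χ h => bk_sur1 hs χ (hfresh χ h)
  have id2 : ∀ χ ∈ Φ, bk (Option.map Sum.inr) s (sur2P s χ) = χ :=
    fun χ h => bk_sur2 hs χ (hfresh χ h)
  have q1 : ∀ q ∈ Q, ∀ Γ : F.W, PVal V (bk (Option.map Sum.inl) s (sur1P s (qhatP none q))) Γ ↔
      PVal V (qhatP none q) Γ :=
    fun q h Γ => qhat_tr_eq (hQ q h).1.2.1 (trOKb1 s) id1 V Γ
  have q2 : ∀ q ∈ Q, ∀ Γ : F.W, PVal V (bk (Option.map Sum.inr) s (sur2P s (qhatP none q))) Γ ↔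
      PVal V (qhatP none q) Γ :=
    fun q h Γ => qhat_tr_eq (hQ q h).1.2.1 (trOKb2 s) id2 V Γ
  have p1 : bk (Option.map Sum.inl) s (PF.and (sur1P s φ) (sur1P s (QhatP none Q))) ∈ T := by
    rw [hmem]
    intro Γ
    refine ⟨?_, ?_⟩
    · have := (hmem φ).1 hφT Γ
      rw [← id1 φ hφ] at this
      exact this
    · refine (pv_Qhat V Γ (trOKb1 s) Q).2 ?_
      obtain ⟨q, a, b⟩ := hQex Γ
      exact ⟨q, a, (q1 q a Γ).2 b⟩
  have p2 : bk (Option.map Sum.inr) s (sur2P s (QhatP none Q)) ∈ T := by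
    rw [hmem]
    intro Γ
    refine (pv_Qhat V Γ (trOKb2 s) Q).2 ?_
    obtain ⟨q, a, b⟩ := hQex Γ
    exact ⟨q, a, (q2 q a Γ).2 b⟩
  refine ⟨Q, fun q h => (hQ q h).1, ?_, ?_, ?_⟩
  · intro h
    have := bk_pg hT s hL1 h p1
    rw [id1 ψ hψ] at this
    exact hψT this
  · intro q hq h
    refine (hQ q hq).2 ((hmem _).2 fun Γ hc => ?_)
    exact (hmem _).1 (bk_pg hT s hL1 h p1) Γ ((q1 q hq Γ).2 hc)
  · intro q hq h
    refine (hQ q hq).2 ((hmem _).2 fun Γ hc => ?_)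
    exact (hmem _).1 (bk_pg hT s hL2 h p2) Γ ((q2 q hq Γ).2 hc)

theorem three_to_two (L1 L2 : Set (PF OU))
    (hS1 : ContainsS5 L1 none) (hS2 : ContainsS5 L2 none)
    (hH1 : AdmitsEHomogGlobal none L1) (hH2 : AdmitsEHomogGlobal none L2)
    (φ ψ : PF OC) (Φ : Finset (PF OC)) (hΦ : SubClosed Φ) (hφ : φ ∈ Φ) (hψ : ψ ∈ Φ)
    (s : PF OC → ℕ)
    (Q : Finset (Finset (Finset (PF OC))))
    (hQ : ∀ q ∈ Q, IsQuasistateP none Φ q)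
    (c1 : ¬ PGlobal L1 (PF.and (sur1P s φ) (sur1P s (QhatP none Q))) (sur1P s ψ))
    (c2 : ∀ q ∈ Q, ¬ PGlobal L1 (PF.and (sur1P s φ) (sur1P s (QhatP none Q)))
          (PF.neg (sur1P s (qhatP none q))))
    (c3 : ∀ q ∈ Q, ¬ PGlobal L2 (sur2P s (QhatP none Q))
          (PF.neg (sur2P s (qhatP none q)))) :
      ∃ F : KFrame OC, FrameFor F (fusionE L1 L2) ∧
        ∃ V : ℕ → F.W → Prop, (∀ w, PVal (F := F) V φ w) ∧
          ∃ w, ¬ PVal (F := F) V ψ w := by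
  obtain ⟨κ1, -, hκ1⟩ := hH1
  obtain ⟨κ2, -, hκ2⟩ := hH2
  have hκ1 := hκ1 (max κ1 κ2) (le_max_left _ _)
  have hκ2 := hκ2 (max κ1 κ2) (le_max_right _ _)
  obtain ⟨F1, hF1, V1, hom1, g1, e1⟩ := exists_base
    (PF.and (sur1P s φ) (sur1P s (QhatP none Q)))
    (insert (sur1P s ψ) {β | ∃ q ∈ Q, β = PF.neg (sur1P s (qhatP none q))})
    ⟨_, Set.mem_insert _ _⟩ (by
      rintro β (rfl | ⟨q, hq, rfl⟩)
      · exact hκ1 _ _ c1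
      · exact hκ1 _ _ (c2 q hq))
  obtain ⟨w0, hw0⟩ := e1 _ (Set.mem_insert _ _)
  obtain ⟨q0, hq0, -⟩ := (pv_Qhat V1 w0 (trOK1 s) Q).1 (g1 w0).2
  obtain ⟨F2, hF2, V2, hom2, g2, e2⟩ := exists_base
    (sur2P s (QhatP none Q))
    {β | ∃ q ∈ Q, β = PF.neg (sur2P s (qhatP none q))}
    ⟨_, q0, hq0, rfl⟩ (by
      rintro β ⟨q, hq, rfl⟩
      exact hκ2 _ _ (c3 q hq))
  obtain ⟨a1, b1⟩ := model_data hQ (trOK1 s) V1 hom1 (fun w => (g1 w).2) (by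
    intro q hq
    obtain ⟨w, hw⟩ := e1 _ (Set.mem_insert_of_mem _ ⟨q, hq, rfl⟩)
    exact ⟨w, not_not.1 hw⟩)
  obtain ⟨a2, b2⟩ := model_data hQ (trOK2 s) V2 hom2 g2 (by
    intro q hq
    obtain ⟨w, hw⟩ := e2 _ ⟨q, hq, rfl⟩
    exact ⟨w, not_not.1 hw⟩)
  obtain ⟨Λ, hΛ, g, hg, hE⟩ := match1 (frame_equiv hS1 hF1) (frame_equiv hS2 hF2) _ _ _ a1 a2
    (fun B => (b1 B).trans (b2 B).symm)
  obtain ⟨hG, ht⟩ := glue hΦ s hF1 hF2 V1 V2 Λ hΛ g hg hE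
  refine ⟨GlueF Λ hΛ F1 F2 g, hG, fun n x => V1 n x.2, fun w => (ht φ hφ w).2 (g1 _).1, ?_⟩
  obtain ⟨a⟩ := hΛ
  exact ⟨(a, w0), fun h => hw0 ((ht ψ hψ _).1 h)⟩

/-- The quasistate criterion for global consequence in the
fusion `L1 ⊗_E L2` of two bimodal logics sharing the S5 operator `□_E`
(designated by `none`).  The surrogate letters are given by an injective map
`s` whose values are fresh for `Φ`. -/
theorem global_quasistate_criterionP (L1 L2 : Set (PF OU))
    (h1 : IsPLogic L1) (h2 : IsPLogic L2)
    (hS1 : ContainsS5 L1 none) (hS2 : ContainsS5 L2 none)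
    (hH1 : AdmitsEHomogGlobal none L1) (hH2 : AdmitsEHomogGlobal none L2)
    (φ ψ : PF OC) (Φ : Finset (PF OC)) (hΦ : Φ = φ.sub ∪ ψ.sub)
    (s : PF OC → ℕ) (hs : Function.Injective s)
    (hfresh : ∀ χ ∈ Φ, ∀ θ, s θ ∉ χ.atoms) :
    (¬ PGlobal (fusionE L1 L2) φ ψ ↔
      ∃ F : KFrame OC, FrameFor F (fusionE L1 L2) ∧
        ∃ V : ℕ → F.W → Prop, (∀ w, PVal (F := F) V φ w) ∧
          ∃ w, ¬ PVal (F := F) V ψ w) ∧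
    (¬ PGlobal (fusionE L1 L2) φ ψ ↔
      ∃ Q : Finset (Finset (Finset (PF OC))),
        (∀ q ∈ Q, IsQuasistateP none Φ q) ∧
        -- (C1)
        (¬ PGlobal L1 (PF.and (sur1P s φ) (sur1P s (QhatP none Q))) (sur1P s ψ)) ∧
        -- (C2)
        (∀ q ∈ Q, ¬ PGlobal L1 (PF.and (sur1P s φ) (sur1P s (QhatP none Q)))
          (PF.neg (sur1P s (qhatP none q)))) ∧
        -- (C3)
        (∀ q ∈ Q, ¬ PGlobal L2 (sur2P s (QhatP none Q))
          (PF.neg (sur2P s (qhatP none q))))) := by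
  have hc : SubClosed Φ := by
    rw [hΦ]
    exact subClosed_union (subClosed_sub φ) (subClosed_sub ψ)
  have hφ : φ ∈ Φ := by
    rw [hΦ]
    exact Finset.mem_union_left _ (self_mem_sub φ)
  have hψ : ψ ∈ Φ := by
    rw [hΦ]
    exact Finset.mem_union_right _ (self_mem_sub ψ)
  have i13 := one_to_three L1 L2 hS1 φ ψ Φ hc hφ hψ s hs hfresh
  have i32 := three_to_two L1 L2 hS1 hS2 hH1 hH2 φ ψ Φ hc hφ hψ s
  have i21 : (∃ F : KFrame OC, FrameFor F (fusionE L1 L2) ∧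
        ∃ V : ℕ → F.W → Prop, (∀ w, PVal (F := F) V φ w) ∧
          ∃ w, ¬ PVal (F := F) V ψ w) → ¬ PGlobal (fusionE L1 L2) φ ψ := by
    rintro ⟨F, hF, V, h, w, hw⟩ hp
    exact hw (pg_sound hp hF V h w)
  refine ⟨⟨fun h => ?_, i21⟩, ⟨i13, ?_⟩⟩
  · obtain ⟨Q, a, b, c, d⟩ := i13 h
    exact i32 Q a b c d
  · rintro ⟨Q, a, b, c, d⟩
    exact i21 (i32 Q a b c d)


end PropML
end

section
/- Let L be a propositional M-logic and d ∈ {xd, cd}. If [L, S5]^d is Kripke complete, then [L, S5]^d admits E-homogeneous models; if [L, S5]^d is globally Kripke complete, then [L, S5]^d admits E-homogeneous models for global consequence. -/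
namespace PropML

lemma PVal_imp {M : Type} {F : KFrame M} (V : ℕ → F.W → Prop) (φ ψ : PF M) (w : F.W) :
    PVal (F := F) V (PF.imp φ ψ) w ↔ (PVal (F := F) V φ w → PVal (F := F) V ψ w) := by
  simp only [PF.imp, PVal]; tauto

lemma PVal_dia {M : Type} {F : KFrame M} (V : ℕ → F.W → Prop) (m : M) (φ : PF M) (w : F.W) :
    PVal (F := F) V (PF.dia m φ) w ↔ ∃ v, F.R m w v ∧ PVal (F := F) V φ v := by
  simp only [PF.dia, PVal]; push Not; rfl

lemma PVal_subst {M : Type} {F : KFrame M} (V : ℕ → F.W → Prop) (σ : ℕ → PF M) (φ : PF M) :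
    ∀ w : F.W, PVal (F := F) V (PF.substP σ φ) w ↔
      PVal (F := F) (fun n w => PVal (F := F) V (σ n) w) φ w := by
  induction φ with
  | atom n => intro w; rfl
  | neg φ ih => intro w; simp only [PF.substP, PVal, ih]
  | and φ ψ ih1 ih2 => intro w; simp only [PF.substP, PVal, ih1, ih2]
  | box m φ ih => intro w; simp only [PF.substP, PVal, ih]

lemma taut_PVal {M : Type} {F : KFrame M} (V : ℕ → F.W → Prop) (w : F.W) (φ : PF M) :
    tautEval (fun ψ => PVal (F := F) V ψ w) φ ↔ PVal (F := F) V φ w := by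
  induction φ with
  | atom n => rfl
  | neg φ ih => simp only [tautEval, PVal, ih]
  | and φ ψ ih1 ih2 => simp only [tautEval, PVal, ih1, ih2]
  | box m φ ih => rfl

lemma validLogic {M : Type} (F : KFrame M) : IsPLogic {φ | PValid F φ} where
  taut φ h V w := (taut_PVal V w φ).1 (h _)
  kax m n k V w := by
    rw [PVal_imp, PVal_imp]
    intro h1 h2 v hv
    exact (PVal_imp _ _ _ _).1 (h1 v hv) (h2 v hv)
  mp φ ψ h1 h2 V w := (PVal_imp _ _ _ _).1 (h1 V w) (h2 V w)
  nec m φ h V w v _ := h V v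
  subst σ φ h V w := (PVal_subst V σ φ w).2 (h _ w)

/-- reduct of a frame along a map of signatures -/
def redF {M M' : Type} (f : M → M') (F : KFrame M') : KFrame M where
  W := F.W
  ne := F.ne
  R m := F.R (f m)

lemma PVal_red {M M' : Type} (f : M → M') (F : KFrame M') (V : ℕ → F.W → Prop) (φ : PF M) :
    ∀ w : F.W, PVal (F := F) V (PF.mapOp f φ) w ↔ PVal (F := redF f F) V φ w := by
  induction φ with
  | atom n => intro w; rfl
  | neg φ ih => intro w; simp only [PF.mapOp, PVal, ih]
  | and φ ψ ih1 ih2 => intro w; simp only [PF.mapOp, PVal, ih1, ih2]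
  | box m φ ih => intro w; simp only [PF.mapOp, PVal, ih]; rfl

/-- semantic characterisation of the S5 part and the interaction axioms -/
structure Good {M : Type} (d : DSem) (L : Set (PF M)) (F : KFrame (Option M)) : Prop where
  base : ∀ φ ∈ L, PValid F (PF.mapOp Option.some φ)
  rfl : ∀ w, F.R none w w
  symm : ∀ w v, F.R none w v → F.R none v w
  trans : ∀ w v u, F.R none w v → F.R none v u → F.R none w u
  lc : ∀ m w v u, F.R none w v → F.R (some m) v u → ∃ t, F.R (some m) w t ∧ F.R none t u
  rc : d = .cd → ∀ m w v u, F.R (some m) w v → F.R none v u →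
    ∃ t, F.R none w t ∧ F.R (some m) t u

lemma xd_sub {M : Type} (d : DSem) (L : Set (PF M)) : LS5xd L ⊆ LS5 d L := by
  cases d with
  | xd => exact fun _ h => h
  | cd => intro φ h L' hL'; exact hL'.2.1 h

lemma good_of_frame {M : Type} (d : DSem) (L : Set (PF M)) (F : KFrame (Option M))
    (h : FrameFor F (LS5 d L)) : Good d L F := by
  have hx : ∀ φ ∈ LS5xd L, PValid F φ := fun φ hφ => h φ (xd_sub d L hφ)
  have hs : ∀ φ ∈ S5L, PValid F (PF.mapOp (fun _ => (none : Option M)) φ) := fun φ hφ =>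
    hx _ (fun L' hL' => hL'.2.2.1 ⟨φ, hφ, rfl⟩)
  have h1 : PValid F (PF.imp (.box none (.atom 0)) (.atom 0)) := hs (PF.imp (.box () (.atom 0)) (.atom 0)) (fun L' hL' => hL'.2.1)
  have h2 : PValid F (PF.imp (.box none (.atom 0)) (.box none (.box none (.atom 0)))) :=
    hs (PF.imp (.box () (.atom 0)) (.box () (.box () (.atom 0))))
    (fun L' hL' => hL'.2.2.1)
  have h3 : PValid F (PF.imp (PF.dia none (.atom 0)) (.box none (PF.dia none (.atom 0)))) :=
    hs (PF.imp (PF.dia () (.atom 0)) (.box () (PF.dia () (.atom 0))))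
    (fun L' hL' => hL'.2.2.2)
  have hr : ∀ w, F.R none w w := by
    intro w
    have := h1 (fun _ v => F.R none w v) w
    rw [PVal_imp] at this
    exact this (fun v hv => hv)
  have ht : ∀ w v u, F.R none w v → F.R none v u → F.R none w u := by
    intro w v u a b
    have := h2 (fun _ v => F.R none w v) w
    rw [PVal_imp] at this
    exact this (fun v hv => hv) v a u b
  have hsy : ∀ w v, F.R none w v → F.R none v w := by
    intro w v a
    have := h3 (fun _ v => v = w) w
    rw [PVal_imp, PVal_dia] at this
    have := this ⟨w, hr w, rfl⟩ v a
    rw [PVal_dia] at this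
    obtain ⟨x, hx, e⟩ := this
    have e' : x = w := e
    rw [e'] at hx
    exact hx
  refine ⟨fun φ hφ => hx _ (fun L' hL' => hL'.2.1 ⟨φ, hφ, rfl⟩), hr, hsy, ht, ?_, ?_⟩
  · intro m w v u a b
    have := hx (lcom m) (fun L' hL' => hL'.2.2.2 m)
      (fun _ u => ∃ t, F.R (some m) w t ∧ F.R none t u) w
    rw [lcom, PVal_imp] at this
    exact this (fun t ht u hu => ⟨t, ht, hu⟩) v a u b
  · rintro rfl m w v u a b
    have := h (rcom m) (fun L' hL' => hL'.2.2 m)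
      (fun _ u => ∃ t, F.R none w t ∧ F.R (some m) t u) w
    rw [rcom, PVal_imp] at this
    exact this (fun t ht u hu => ⟨t, ht, hu⟩) v a u b

lemma frame_of_good {M : Type} (d : DSem) (L : Set (PF M)) (F : KFrame (Option M))
    (h : Good d L F) : FrameFor F (LS5 d L) := by
  have hx : LS5xd L ⊆ {φ | PValid F φ} := by
    refine Set.sInter_subset_of_mem ⟨validLogic F, ?_, ?_, ?_⟩
    · rintro _ ⟨φ, hφ, rfl⟩; exact h.base φ hφ
    · rintro _ ⟨φ, hφ, rfl⟩ V w
      rw [PVal_red]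
      have := hφ _ ⟨validLogic (redF (fun _ => (none : Option M)) F), ?_, ?_, ?_⟩
      · exact this V w
      · intro V w
        rw [PVal_imp]
        exact fun a => a w (h.rfl w)
      · intro V w
        rw [PVal_imp]
        exact fun a v hv u hu => a u (h.trans _ _ _ hv hu)
      · intro V w
        rw [PVal_imp, PVal_dia]
        rintro ⟨x, hx, e⟩ v hv
        rw [PVal_dia]
        exact ⟨x, h.trans _ _ _ (h.symm _ _ hv) hx, e⟩
    · intro m V w
      rw [lcom, PVal_imp]
      intro a v hv u hu
      obtain ⟨t, h1, h2⟩ := h.lc m w v u hv hu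
      exact a t h1 u h2
  cases d with
  | xd => exact fun φ hφ => hx hφ
  | cd =>
    intro φ hφ
    refine hφ {φ | PValid F φ} ⟨validLogic F, hx, ?_⟩
    intro m V w
    rw [rcom, PVal_imp]
    intro a v hv u hu
    obtain ⟨t, h1, h2⟩ := h.rc rfl m w v u hv hu
    exact a t h1 u h2

/-- blow-up of a frame by an index set -/
def blow {M : Type} (F : KFrame (Option M)) (I : Type) [hI : Nonempty I] :
    KFrame (Option M) where
  W := F.W × I
  ne := by haveI := F.ne; infer_instance
  R m x y := match m with
    | none => F.R none x.1 y.1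
    | some m => F.R (some m) x.1 y.1 ∧ x.2 = y.2

lemma blow_base {M : Type} (F : KFrame (Option M)) (I : Type) [Nonempty I]
    (V : ℕ → (blow F I).W → Prop) (i : I) (φ : PF M) : ∀ w : F.W,
    PVal (F := blow F I) V (PF.mapOp Option.some φ) (w, i) ↔
      PVal (F := F) (fun n v => V n (v, i)) (PF.mapOp Option.some φ) w := by
  induction φ with
  | atom n => intro w; rfl
  | neg φ ih => intro w; simp only [PF.mapOp, PVal, ih]
  | and φ ψ ih1 ih2 => intro w; simp only [PF.mapOp, PVal, ih1, ih2]
  | box m φ ih =>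
    intro w
    constructor
    · intro a v hv
      exact (ih v).1 (a (v, i) ⟨hv, rfl⟩)
    · rintro a ⟨v, j⟩ ⟨hv, hj⟩
      have hj' : i = j := hj
      subst hj'
      exact (ih v).2 (a v hv)

lemma blow_val {M : Type} (F : KFrame (Option M)) (I : Type) [Nonempty I]
    (V : ℕ → F.W → Prop) (φ : PF (Option M)) : ∀ x : F.W × I,
    PVal (F := blow F I) (fun n y => V n y.1) φ x ↔ PVal (F := F) V φ x.1 := by
  induction φ with
  | atom n => intro w; rfl
  | neg φ ih =>
    intro w
    exact not_congr (ih w)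
  | and φ ψ ih1 ih2 =>
    intro w
    exact and_congr (ih1 w) (ih2 w)
  | box m φ ih =>
    intro x
    constructor
    · intro a v hv
      refine (ih (v, x.2)).1 (a (v, x.2) ?_)
      cases m with
      | none => exact hv
      | some m => exact ⟨hv, rfl⟩
    · intro a y hy
      refine (ih y).2 (a y.1 ?_)
      cases m with
      | none => exact hy
      | some m => exact hy.1

lemma blow_good {M : Type} (d : DSem) (L : Set (PF M)) (F : KFrame (Option M))
    (I : Type) [Nonempty I] (h : Good d L F) : Good d L (blow F I) where
  base := by
    rintro φ hφ V ⟨w, i⟩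
    rw [blow_base]
    exact h.base φ hφ _ w
  rfl w := h.rfl w.1
  symm w v := h.symm w.1 v.1
  trans w v u := h.trans w.1 v.1 u.1
  lc m w v u a b := by
    obtain ⟨t, h1, h2⟩ := h.lc m w.1 v.1 u.1 a b.1
    exact ⟨(t, w.2), ⟨h1, rfl⟩, h2⟩
  rc hd m w v u a b := by
    obtain ⟨t, h1, h2⟩ := h.rc hd m w.1 v.1 u.1 a.1 b
    exact ⟨(t, u.2), h1, h2, rfl⟩

lemma blow_homog {M : Type} (F : KFrame (Option M)) (I : Type) [Nonempty I]
    (V : ℕ → F.W → Prop) (hI : Cardinal.aleph0 ≤ Cardinal.mk I)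
    (hF : Cardinal.mk F.W ≤ Cardinal.mk I) :
    EHomog (F := blow F I) (none : Option M) (fun n y => V n y.1) (Cardinal.mk I) := by
  intro w φ
  let S := {v : F.W // F.R none w.1 v ∧ PVal (F := F) V φ v}
  have e : {v : (blow F I).W // (blow F I).R none w v ∧
      PVal (F := blow F I) (fun n y => V n y.1) φ v} ≃ S × I :=
    { toFun := fun v => (⟨v.1.1, v.2.1, (blow_val F I V φ v.1).1 v.2.2⟩, v.1.2)
      invFun := fun s => ⟨(s.1.1, s.2), s.1.2.1, (blow_val F I V φ (s.1.1, s.2)).2 s.1.2.2⟩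
      left_inv := fun _ => rfl
      right_inv := fun _ => rfl }
  rw [Cardinal.mk_congr e, Cardinal.mk_prod, Cardinal.lift_id, Cardinal.lift_id]
  by_cases hS : Cardinal.mk S = 0
  · left; rw [hS, zero_mul]
  · right
    exact Cardinal.mul_eq_right hI ((Cardinal.mk_subtype_le _).trans hF) hS

lemma exists_homog {M : Type} (d : DSem) (L : Set (PF M)) (F : KFrame (Option M))
    (h : FrameFor F (LS5 d L)) (V : ℕ → F.W → Prop) (κ : Cardinal)
    (hκ : Cardinal.aleph0 ≤ κ) (hF : Cardinal.mk F.W ≤ κ) :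
    ∃ F' : KFrame (Option M), FrameFor F' (LS5 d L) ∧ ∃ V' : ℕ → F'.W → Prop,
      EHomog (F := F') none V' κ ∧
      (∀ φ, (∀ w, PVal (F := F) V φ w) → ∀ w, PVal (F := F') V' φ w) ∧
      (∀ φ, (∃ w, ¬ PVal (F := F) V φ w) → ∃ w, ¬ PVal (F := F') V' φ w) := by
  have hm : Cardinal.mk κ.out = κ := Cardinal.mk_out κ
  haveI : Nonempty κ.out := by
    rw [← Cardinal.mk_ne_zero_iff, hm]
    exact (Cardinal.aleph0_pos.trans_le hκ).ne'
  refine ⟨blow F κ.out, frame_of_good d L _ (blow_good d L F _ (good_of_frame d L F h)),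
    fun n y => V n y.1, ?_, ?_, ?_⟩
  · have := blow_homog F κ.out V (by rw [hm]; exact hκ) (by rw [hm]; exact hF)
    rwa [hm] at this
  · intro φ a w
    exact (blow_val F _ V φ w).2 (a w.1)
  · rintro φ ⟨w, hw⟩
    refine ⟨(w, Classical.arbitrary _), fun a => hw ?_⟩
    exact (blow_val F _ V φ _).1 a

/-- If `[L, S5]^d` is (globally) Kripke complete, then it
admits `E`-homogeneous models (for global consequence); here `□_E` is the
operator `none` of the extended signature. -/
theorem LS5_admits_homogeneous {M : Type} (d : DSem) (L : Set (PF M))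
    (hL : IsPLogic L) :
    (KComplete (LS5 d L) → AdmitsEHomog (none : Option M) (LS5 d L)) ∧
    (GloballyKComplete (LS5 d L) →
      AdmitsEHomogGlobal (none : Option M) (LS5 d L)) := by
  constructor
  · intro hc
    have key : ∀ φ : {φ // φ ∉ LS5 d L}, ∃ F : KFrame (Option M), FrameFor F (LS5 d L) ∧
        ∃ V : ℕ → F.W → Prop, ∃ w, ¬ PVal (F := F) V φ.1 w := by
      intro φ
      by_contra hcon
      push Not at hcon
      exact φ.2 (hc φ.1 (fun F hF V w => hcon F hF V w))
    choose F hF V hV using key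
    refine ⟨max Cardinal.aleph0 (Cardinal.sum fun φ => Cardinal.mk (F φ).W),
      le_max_left _ _, ?_⟩
    intro κ hκ φ hφ
    obtain ⟨F', h1, V', h2, _, h4⟩ := exists_homog d L (F ⟨φ, hφ⟩) (hF _) (V _) κ
      ((le_max_left _ _).trans hκ)
      ((Cardinal.le_sum (fun φ => Cardinal.mk (F φ).W) ⟨φ, hφ⟩).trans
        ((le_max_right _ _).trans hκ))
    exact ⟨F', h1, V', h2, h4 φ (hV _)⟩
  · intro hc
    have key : ∀ p : {p : PF (Option M) × PF (Option M) // ¬ PGlobal (LS5 d L) p.1 p.2},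
        ∃ F : KFrame (Option M), FrameFor F (LS5 d L) ∧
        ∃ V : ℕ → F.W → Prop, (∀ w, PVal (F := F) V p.1.1 w) ∧
          ∃ w, ¬ PVal (F := F) V p.1.2 w := by
      intro p
      by_contra hcon
      push Not at hcon
      exact p.2 ((hc p.1.1 p.1.2).2 (fun F hF V a w => hcon F hF V a w))
    choose F hF V hV hV' using key
    refine ⟨max Cardinal.aleph0 (Cardinal.sum fun p => Cardinal.mk (F p).W),
      le_max_left _ _, ?_⟩
    intro κ hκ φ ψ hφ
    obtain ⟨F', h1, V', h2, h3, h4⟩ := exists_homog d L (F ⟨(φ, ψ), hφ⟩) (hF _) (V _) κ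
      ((le_max_left _ _).trans hκ)
      ((Cardinal.le_sum (fun p => Cardinal.mk (F p).W) ⟨(φ, ψ), hφ⟩).trans
        ((le_max_right _ _).trans hκ))
    exact ⟨F', h1, V', h2, h3 φ (hV _), h4 ψ (hV' _)⟩

end PropML
end
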